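/- arXiv:2103.04304 — 7 statements merged into one kernel-verified Lean document; each statement's English description precedes it below -/
import Mathlib

section
/- For any instance with n agents having additive valuations v_1,…,v_n over a finite set M of indivisible goods and entitlements b_1,…,b_n > 0 summing to 1, there exists an allocation (A_1,…,A_n) of M such that every agent i receives value v_i(A_i) at least the maximum of the following three quantities: (3/5)·APS(b_i, v_i, M); (1/(2−b_i))·TPS(b_i, v_i, M); and the value of her ⌊1/b_i⌋-th highest-valued item in M. -/
open Finset

def IsPartition {ι : Type*} [DecidableEq ι] (M : Finset ι) {n : ℕ} (A : Fin n → Finset ι) : Prop :=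
  (∀ i, A i ⊆ M) ∧ (∀ i j, i ≠ j → Disjoint (A i) (A j)) ∧ ∀ x ∈ M, ∃ i, x ∈ A i

/-- The AnyPrice share (price-based definition): the minimum over all nonnegative
price vectors summing to 1 of the best value of an affordable bundle. -/
noncomputable def APS {ι : Type*} (b : ℝ) (v : Finset ι → ℝ) (M : Finset ι) : ℝ :=
  sInf {t : ℝ | ∃ p : ι → ℝ, (∀ j ∈ M, 0 ≤ p j) ∧ (∑ j ∈ M, p j) = 1 ∧
    t = sSup {u : ℝ | ∃ S, S ⊆ M ∧ (∑ j ∈ S, p j) ≤ b ∧ u = v S}}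

/-- The truncated proportional share of an additive valuation with item values `w`:
the largest `z ≥ 0` with `b * ∑_{j ∈ M} min (w j) z = z`. -/
noncomputable def TPS {ι : Type*} (b : ℝ) (w : ι → ℝ) (M : Finset ι) : ℝ :=
  sSup {z : ℝ | 0 ≤ z ∧ b * ∑ j ∈ M, min (w j) z = z}

/-- The value of the `k`-th highest valued item of `M` (as the best minimum value
over subsets of `M` of cardinality `k`). -/
noncomputable def kthHighest {ι : Type*} (w : ι → ℝ) (M : Finset ι) (k : ℕ) : ℝ :=
  sSup {t : ℝ | ∃ S ⊆ M, S.card = k ∧ ∀ j ∈ S, t ≤ w j}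

inductive Win {ι : Type*} [DecidableEq ι] (T : ℝ) (u : ι → ℝ) :
    Finset ι → ℝ → ℝ → ℝ → Prop
  | done {R x β a} (h : T ≤ x) : Win T u R x β a
  | bid {R x β a} (c : ℝ) (j : ι) (hc : 0 ≤ c) (hcβ : c ≤ β) (hj : j ∈ R)
      (h1 : Win T u (R.erase j) (x + u j) (β - c) a)
      (h2 : ∀ j' ∈ R, ∀ c', c ≤ c' → c' ≤ a → Win T u (R.erase j') x β (a - c')) :
      Win T u R x β a

theorem Win.scale {ι : Type*} [DecidableEq ι] {T : ℝ} {u : ι → ℝ} {R : Finset ι} {x β a : ℝ}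
    (h : Win T u R x β a) (k s : ℝ) (hk : 0 < k) (hs : 0 < s) :
    Win (k * T) (fun j => k * u j) R (k * x) (s * β) (s * a) := by
  induction h with
  | done h => exact Win.done (by gcongr)
  | @bid R x β a c j hc hcβ hj h1 h2 ih1 ih2 =>
    refine Win.bid (s * c) j (by positivity) (by gcongr) hj ?_ ?_
    · have e1 : k * x + k * u j = k * (x + u j) := by ring
      have e2 : s * β - s * c = s * (β - c) := by ring
      rw [e1, e2]; exact ih1
    · intro j' hj' c' h1 h2
      have := ih2 j' hj' (c' / s) (by rw [le_div_iff₀ hs]; linarith)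
        (by rw [div_le_iff₀ hs]; linarith)
      have e : s * (a - c' / s) = s * a - c' := by field_simp
      rwa [e] at this

theorem combine {ι : Type*} [DecidableEq ι] (n : ℕ) (hn : 0 < n) (M : Finset ι)
    (T : Fin n → ℝ) (w : Fin n → ι → ℝ) (hw : ∀ i, ∀ j ∈ M, 0 ≤ w i j) :
    ∀ (m : ℕ) (R : Finset ι) (X : Fin n → Finset ι) (β : Fin n → ℝ),
      R.card = m → R ⊆ M → (∀ i, X i ⊆ M) → (∀ i j, i ≠ j → Disjoint (X i) (X j)) →
      (∀ i, Disjoint (X i) R) → (∀ x ∈ M, x ∈ R ∨ ∃ i, x ∈ X i) → (∀ i, 0 ≤ β i) →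
      (∀ i, Win (T i) (w i) R (∑ j ∈ X i, w i j) (β i) ((∑ k, β k) - β i)) →
      ∃ A : Fin n → Finset ι, IsPartition M A ∧ ∀ i, T i ≤ ∑ j ∈ A i, w i j := by
  intro m
  induction m with
  | zero =>
    intro R X β hR hRM hX hd hdR hc hβ hW
    have hR0 : R = ∅ := Finset.card_eq_zero.mp hR
    subst hR0
    refine ⟨X, ⟨hX, hd, fun x hx => by simpa using hc x hx⟩, fun i => ?_⟩
    cases hW i with
    | done h => exact h
    | bid c j _ _ hj => simp at hj
  | succ m ih =>
    intro R X β hR hRM hX hd hdR hc hβ hW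
    by_cases hall : ∀ i, T i ≤ ∑ j ∈ X i, w i j
    · refine ⟨fun i => if i = ⟨0, hn⟩ then X i ∪ R else X i, ⟨?_, ?_, ?_⟩, ?_⟩
      · intro i
        dsimp only
        split_ifs
        · exact Finset.union_subset (hX i) hRM
        · exact hX i
      · intro i j hij
        dsimp only
        split_ifs with h1 h2 h2
        · exact absurd (h1.trans h2.symm) hij
        · exact Finset.disjoint_union_left.mpr ⟨hd i j hij, (hdR j).symm⟩
        · exact Finset.disjoint_union_right.mpr ⟨hd i j hij, hdR i⟩
        · exact hd i j hij
      · intro x hx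
        rcases hc x hx with h | ⟨i, h⟩
        · exact ⟨⟨0, hn⟩, by simp [h]⟩
        · refine ⟨i, ?_⟩
          dsimp only
          split_ifs
          · exact Finset.mem_union_left _ h
          · exact h
      · intro i
        dsimp only
        split_ifs
        · refine (hall i).trans (Finset.sum_le_sum_of_subset_of_nonneg Finset.subset_union_left ?_)
          intro j hj _
          rcases Finset.mem_union.mp hj with h | h
          · exact hw i j (hX i h)
          · exact hw i j (hRM h)
        · exact hall i
    · have key : ∀ i, ∃ (c : ℝ) (j : ι), ¬ (T i ≤ ∑ j ∈ X i, w i j) →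
          (0 ≤ c ∧ c ≤ β i ∧ j ∈ R ∧
          Win (T i) (w i) (R.erase j) ((∑ j ∈ X i, w i j) + w i j) (β i - c) ((∑ k, β k) - β i) ∧
          ∀ j' ∈ R, ∀ c', c ≤ c' → c' ≤ (∑ k, β k) - β i →
            Win (T i) (w i) (R.erase j') (∑ j ∈ X i, w i j) (β i) ((∑ k, β k) - β i - c')) := by
        intro i
        have hRne : R.Nonempty := by
          rw [← Finset.card_pos]; omega
        cases hW i with
        | done h => exact ⟨0, hRne.choose, fun h' => absurd h h'⟩
        | bid c j h1 h2 h3 h4 h5 => exact ⟨c, j, fun _ => ⟨h1, h2, h3, h4, h5⟩⟩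
      choose c j hcj using key
      obtain ⟨i, hi, himax⟩ := Finset.exists_max_image
        (Finset.univ.filter (fun i => ¬ (T i ≤ ∑ j ∈ X i, w i j))) c
        (by push Not at hall; obtain ⟨i, hi⟩ := hall; exact ⟨i, by simp [hi]⟩)
      have hi' : ¬ (T i ≤ ∑ j ∈ X i, w i j) := by simpa using hi
      obtain ⟨h1, h2, h3, h4, h5⟩ := hcj i hi'
      have hsum : ∑ k, Function.update β i (β i - c i) k = (∑ k, β k) - c i := by
        rw [Finset.sum_update_of_mem (Finset.mem_univ i), ← Finset.sum_erase_add Finset.univ β (Finset.mem_univ i), Finset.sdiff_singleton_eq_erase]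
        ring
      have hjX : ∀ k, j i ∉ X k := fun k hk => (Finset.disjoint_left.mp (hdR k)) hk h3
      refine ih (R.erase (j i)) (Function.update X i (insert (j i) (X i)))
        (Function.update β i (β i - c i)) ?_ ?_ ?_ ?_ ?_ ?_ ?_ ?_
      · rw [Finset.card_erase_of_mem h3]; omega
      · exact (Finset.erase_subset _ _).trans hRM
      · intro k
        by_cases hk : k = i
        · subst hk; simp only [Function.update_self]
          exact Finset.insert_subset (hRM h3) (hX _)
        · simp only [Function.update_of_ne hk]; exact hX k
      · intro k l hkl
        by_cases hk : k = i
        · subst hk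
          simp only [Function.update_self, Function.update_of_ne (Ne.symm hkl)]
          exact Finset.disjoint_insert_left.mpr ⟨hjX l, hd _ _ hkl⟩
        · by_cases hl : l = i
          · subst hl
            simp only [Function.update_self, Function.update_of_ne hk]
            exact Finset.disjoint_insert_right.mpr ⟨hjX k, hd _ _ hkl⟩
          · simp only [Function.update_of_ne hk, Function.update_of_ne hl]; exact hd _ _ hkl
      · intro k
        by_cases hk : k = i
        · subst hk
          simp only [Function.update_self]
          exact Finset.disjoint_insert_left.mpr ⟨by simp, (hdR _).mono_right (Finset.erase_subset _ _)⟩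
        · simp only [Function.update_of_ne hk]
          exact (hdR _).mono_right (Finset.erase_subset _ _)
      · intro x hx
        by_cases hxj : x = j i
        · right; exact ⟨i, by simp [hxj]⟩
        · rcases hc x hx with h | ⟨k, h⟩
          · left; exact Finset.mem_erase.mpr ⟨hxj, h⟩
          · right
            refine ⟨k, ?_⟩
            by_cases hk : k = i
            · subst hk; simp [h]
            · simpa [Function.update_of_ne hk] using h
      · intro k
        by_cases hk : k = i
        · subst hk; simp only [Function.update_self]; linarith
        · simp only [Function.update_of_ne hk]; exact hβ k
      · intro k
        rw [hsum]
        by_cases hk : k = i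
        · subst hk
          simp only [Function.update_self]
          rw [Finset.sum_insert (hjX _), add_comm]
          convert h4 using 1
          ring
        · simp only [Function.update_of_ne hk]
          by_cases hs : T k ≤ ∑ j ∈ X k, w k j
          · exact Win.done hs
          · obtain ⟨g1, g2, g3, g4, g5⟩ := hcj k hs
            have hle : c k ≤ c i := himax k (by simpa using hs)
            have hik : β i + β k ≤ ∑ k, β k := by
              rw [← Finset.sum_pair (Ne.symm hk)]
              exact Finset.sum_le_sum_of_subset_of_nonneg (Finset.subset_univ _)
                (fun l _ _ => hβ l)
            have := g5 (j i) h3 (c i) hle (by linarith)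
            convert this using 1
            ring

theorem win_lin {ι : Type*} [DecidableEq ι] (T : ℝ) (u : ι → ℝ) (X0 δ r : ℝ)
    (hr : 0 < r) (hT : T ≤ X0 + δ) :
    ∀ (m : ℕ) (R : Finset ι) (x a : ℝ), R.card = m → (∀ j ∈ R, 0 ≤ u j) → 0 ≤ a → 0 ≤ x →
      (∀ j ∈ R, δ ≤ u j → x = 0) →
      a + r * δ - r * x ≤ ∑ j ∈ R, (if δ ≤ u j then 2 * r * δ else r * u j) →
      Win T u R (X0 + x) (2 * r * δ - r * x) a := by
  intro m
  induction m with
  | zero =>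
    intro R x a hR hu ha hx hz hs
    have hR0 : R = ∅ := Finset.card_eq_zero.mp hR
    subst hR0
    simp only [Finset.sum_empty] at hs
    have : δ ≤ x := le_of_mul_le_mul_left (by linarith) hr
    exact Win.done (by linarith)
  | succ m ih =>
    intro R x a hR hu ha hx hz hs
    by_cases hd : δ ≤ x
    · exact Win.done (by linarith)
    push Not at hd
    have hrd : r * x < r * δ := by gcongr
    have hrx : 0 ≤ r * x := by positivity
    have hRne : R.Nonempty := by rw [← Finset.card_pos]; omega
    obtain ⟨j, hj, hmax⟩ := Finset.exists_max_image R u hRne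
    have hcard : ∀ j' ∈ R, (R.erase j').card = m := fun j' hj' => by
      rw [Finset.card_erase_of_mem hj']; omega
    have hu' : ∀ j', ∀ k ∈ R.erase j', 0 ≤ u k := fun j' k hk => hu k (Finset.mem_of_mem_erase hk)
    by_cases hδj : δ ≤ u j
    · have hx0 := hz j hj hδj
      subst hx0
      refine Win.bid (2 * r * δ) j (by linarith) (by linarith) hj (Win.done (by linarith)) ?_
      intro j' hj' c' hc' hca
      refine ih _ _ _ (hcard j' hj') (hu' j') (by linarith) le_rfl (fun _ _ _ => rfl) ?_
      rw [← Finset.add_sum_erase R _ hj'] at hs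
      have : (if δ ≤ u j' then 2 * r * δ else r * u j') ≤ c' := by
        split_ifs with h
        · exact hc'
        · push Not at h
          have : r * u j' < r * δ := by gcongr
          linarith
      linarith
    · push Not at hδj
      have hb : r * u j < r * δ := by gcongr
      refine Win.bid (r * u j) j (mul_nonneg hr.le (hu j hj)) (by linarith) hj ?_ ?_
      · have e1 : X0 + x + u j = X0 + (x + u j) := by ring
        have e2 : 2 * r * δ - r * x - r * u j = 2 * r * δ - r * (x + u j) := by ring
        rw [e1, e2]
        refine ih _ _ _ (hcard j hj) (hu' j) ha (by linarith [hu j hj]) ?_ ?_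
        · intro k hk hk'
          have := hmax k (Finset.mem_of_mem_erase hk)
          linarith
        · rw [← Finset.add_sum_erase R _ hj, if_neg (by linarith)] at hs
          linarith
      · intro j' hj' c' hc' hca
        refine ih _ _ _ (hcard j' hj') (hu' j') (by linarith) hx
          (fun k hk => hz k (Finset.mem_of_mem_erase hk)) ?_
        have h1 := hmax j' hj'
        have h2 : r * u j' ≤ r * u j := by gcongr
        rw [← Finset.add_sum_erase R _ hj', if_neg (by linarith)] at hs
        linarith

theorem win_full {ι : Type*} [DecidableEq ι] (T : ℝ) (u : ι → ℝ) (β : ℝ) (hβ : 0 < β) :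
    ∀ (m : ℕ) (R : Finset ι) (a : ℝ), R.card = m → 0 ≤ a →
      a < ∑ j ∈ R, (if T ≤ u j then β else 0) → Win T u R 0 β a := by
  intro m
  induction m with
  | zero =>
    intro R a hR ha hs
    have hR0 : R = ∅ := Finset.card_eq_zero.mp hR
    subst hR0
    simp at hs; linarith
  | succ m ih =>
    intro R a hR ha hs
    have : ∃ j ∈ R, T ≤ u j := by
      by_contra h
      push Not at h
      rw [Finset.sum_eq_zero (fun j hj => if_neg (not_le.mpr (h j hj)))] at hs
      linarith
    obtain ⟨j, hj, hTj⟩ := this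
    refine Win.bid β j hβ.le le_rfl hj (Win.done (by linarith)) ?_
    intro j' hj' c' hc' hca
    refine ih _ _ (by rw [Finset.card_erase_of_mem hj']; omega) (by linarith) ?_
    rw [← Finset.add_sum_erase R _ hj'] at hs
    have : (if T ≤ u j' then β else 0) ≤ c' := by split_ifs <;> linarith
    linarith

theorem win_S3 {ι : Type*} [DecidableEq ι] (u : ι → ℝ) :
    ∀ (m : ℕ) (R : Finset ι) (x a : ℝ), R.card = m →
      (∀ j ∈ R, 0 ≤ u j ∧ 2 * u j ≤ x ∧ x + u j ≤ 4 / 3) → 0 ≤ a →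
      a + 1 - 3 / 4 * x ≤ ∑ j ∈ R, 3 / 4 * u j →
      Win 1 u R x (1 - 3 / 4 * x) a := by
  intro m
  induction m with
  | zero =>
    intro R x a hR hu ha hs
    have hR0 : R = ∅ := Finset.card_eq_zero.mp hR
    subst hR0
    simp only [Finset.sum_empty] at hs
    exact Win.done (by linarith)
  | succ m ih =>
    intro R x a hR hu ha hs
    by_cases hd : 1 ≤ x
    · exact Win.done hd
    push Not at hd
    have hRne : R.Nonempty := by rw [← Finset.card_pos]; omega
    obtain ⟨j, hj, hmax⟩ := Finset.exists_max_image R u hRne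
    obtain ⟨g1, g2, g3⟩ := hu j hj
    refine Win.bid (3 / 4 * u j) j (by linarith) (by linarith) hj ?_ ?_
    · by_cases hd' : 1 ≤ x + u j
      · exact Win.done hd'
      push Not at hd'
      have e2 : 1 - 3 / 4 * x - 3 / 4 * u j = 1 - 3 / 4 * (x + u j) := by ring
      rw [e2]
      refine ih _ _ _ (by rw [Finset.card_erase_of_mem hj]; omega) ?_ ha ?_
      · intro k hk
        have hk' := Finset.mem_of_mem_erase hk
        have := hmax k hk'
        exact ⟨(hu k hk').1, by linarith, by linarith⟩
      · rw [← Finset.add_sum_erase R _ hj] at hs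
        linarith
    · intro j' hj' c' hc' hca
      refine ih _ _ _ (by rw [Finset.card_erase_of_mem hj']; omega)
        (fun k hk => hu k (Finset.mem_of_mem_erase hk)) (by linarith) ?_
      have := hmax j' hj'
      rw [← Finset.add_sum_erase R _ hj'] at hs
      linarith

theorem K1 {ι : Type*} [DecidableEq ι] (S : Finset ι) (u P : ι → ℝ)
    (h0 : ∀ j ∈ S, 0 ≤ P j)
    (h : ∀ j ∈ S, 1 ≤ P j ∨ (1 / 2 ≤ P j ∧ u j < 1) ∨ 3 / 4 * u j ≤ P j)
    (hS : 5 / 3 ≤ ∑ j ∈ S, u j) : 1 ≤ ∑ j ∈ S, P j := by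
  by_cases h1 : ∃ j ∈ S, 1 ≤ P j
  · obtain ⟨j, hj, hp⟩ := h1
    exact hp.trans (Finset.single_le_sum h0 hj)
  push Not at h1
  by_cases h2 : ∃ j ∈ S, 1 / 2 ≤ P j ∧ u j < 1
  · obtain ⟨j, hj, hp, huj⟩ := h2
    rw [← Finset.add_sum_erase S _ hj] at hS ⊢
    by_cases h3 : ∃ k ∈ S.erase j, 1 / 2 ≤ P k
    · obtain ⟨k, hk, hpk⟩ := h3
      have := Finset.single_le_sum (fun i hi => h0 i (Finset.mem_of_mem_erase hi)) hk
      linarith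
    · push Not at h3
      have : ∑ k ∈ S.erase j, 3 / 4 * u k ≤ ∑ k ∈ S.erase j, P k := by
        refine Finset.sum_le_sum fun k hk => ?_
        have a1 := h3 k hk
        have a2 := h1 k (Finset.mem_of_mem_erase hk)
        rcases h k (Finset.mem_of_mem_erase hk) with h | h | h
        · linarith
        · linarith [h.1]
        · exact h
      rw [← Finset.mul_sum] at this
      linarith
  · have : ∑ k ∈ S, 3 / 4 * u k ≤ ∑ k ∈ S, P k := by
      refine Finset.sum_le_sum fun k hk => ?_
      have a2 := h1 k hk
      rcases h k hk with h | h | h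
      · linarith
      · exact absurd ⟨k, hk, h⟩ h2
      · exact h
    rw [← Finset.mul_sum] at this
    linarith

set_option maxHeartbeats 4000000 in
theorem K2 {ι : Type*} [DecidableEq ι] (S : Finset ι) (u P : ι → ℝ)
    (h0 : ∀ j ∈ S, 0 ≤ P j)
    (h : ∀ j ∈ S, 1 ≤ P j ∨ (1 / 2 ≤ P j ∧ u j < 1) ∨
      (u j < 2 / 3 ∧ 3 / 4 * u j ≤ P j ∧ 1 / 4 ≤ P j) ∨ (u j < 1 / 2 ∧ 1 / 4 ≤ P j) ∨
      3 / 2 * u j ≤ P j)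
    (hS : 5 / 3 ≤ ∑ j ∈ S, u j) : 1 ≤ ∑ j ∈ S, P j := by
  rw [← Finset.sum_filter_add_sum_filter_not S (fun j => 1 / 4 ≤ P j)] at hS ⊢
  set L := S.filter (fun j => 1 / 4 ≤ P j) with hL
  set E := S.filter (fun j => ¬ 1 / 4 ≤ P j) with hE
  have hE1 : 3 / 2 * ∑ k ∈ E, u k ≤ ∑ k ∈ E, P k := by
    rw [Finset.mul_sum]
    refine Finset.sum_le_sum fun k hk => ?_
    obtain ⟨hkS, hk2⟩ := Finset.mem_filter.mp hk
    rcases h k hkS with h | h | h | h | h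
    · linarith
    · linarith [h.1]
    · linarith [h.2.2]
    · linarith [h.2]
    · exact h
  have hE0 : 0 ≤ ∑ k ∈ E, P k := Finset.sum_nonneg fun k hk => h0 k (Finset.mem_filter.mp hk).1
  have hL4 : (L.card : ℝ) * (1 / 4) ≤ ∑ k ∈ L, P k := by
    rw [← nsmul_eq_mul]
    exact Finset.card_nsmul_le_sum _ _ _ fun k hk => (Finset.mem_filter.mp hk).2
  have hLc : ∀ k ∈ L, 1 / 4 ≤ P k ∧ (1 ≤ P k ∨ (1 / 2 ≤ P k ∧ u k < 1) ∨
      (u k < 2 / 3 ∧ 3 / 4 * u k ≤ P k) ∨ (u k < 1 / 2) ∨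
      3 / 2 * u k ≤ P k) := by
    intro k hk
    obtain ⟨hkS, hk2⟩ := Finset.mem_filter.mp hk
    refine ⟨hk2, ?_⟩
    rcases h k hkS with h | h | h | h | h
    · exact Or.inl h
    · exact Or.inr (Or.inl h)
    · exact Or.inr (Or.inr (Or.inl ⟨h.1, h.2.1⟩))
    · exact Or.inr (Or.inr (Or.inr (Or.inl h.1)))
    · exact Or.inr (Or.inr (Or.inr (Or.inr h)))
  clear_value L E
  by_cases hc : 4 ≤ L.card
  · have : (4 : ℝ) ≤ L.card := by exact_mod_cast hc
    linarith
  · have : L.card = 0 ∨ L.card = 1 ∨ L.card = 2 ∨ L.card = 3 := by omega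
    rcases this with h | h | h | h
    · rw [Finset.card_eq_zero] at h
      subst h
      simp only [Finset.sum_empty] at hS ⊢
      linarith
    · obtain ⟨x, rfl⟩ := Finset.card_eq_one.mp h
      obtain ⟨x0, hx⟩ := hLc x (by simp)
      simp only [Finset.sum_singleton] at hS ⊢
      rcases hx with hx | ⟨hx, hx'⟩ | ⟨hx, hx'⟩ | hx | hx <;> linarith
    · obtain ⟨x, y, hxy, rfl⟩ := Finset.card_eq_two.mp h
      obtain ⟨x0, hx⟩ := hLc x (by simp)
      obtain ⟨y0, hy⟩ := hLc y (by simp)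
      rw [Finset.sum_pair hxy] at hS ⊢
      rcases hx with hx | ⟨hx, hx'⟩ | ⟨hx, hx'⟩ | hx | hx <;>
      rcases hy with hy | ⟨hy, hy'⟩ | ⟨hy, hy'⟩ | hy | hy <;> linarith
    · obtain ⟨x, y, z, hxy, hxz, hyz, rfl⟩ := Finset.card_eq_three.mp h
      obtain ⟨x0, hx⟩ := hLc x (by simp)
      obtain ⟨y0, hy⟩ := hLc y (by simp)
      obtain ⟨z0, hz⟩ := hLc z (by simp)
      rw [Finset.sum_insert (by simp [hxy, hxz]), Finset.sum_pair hyz] at hS ⊢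
      rcases hx with hx | ⟨hx, hx'⟩ | ⟨hx, hx'⟩ | hx | hx <;>
      rcases hy with hy | ⟨hy, hy'⟩ | ⟨hy, hy'⟩ | hy | hy <;>
      rcases hz with hz | ⟨hz, hz'⟩ | ⟨hz, hz'⟩ | hz | hz <;> linarith

def Ledger {ι : Type*} [DecidableEq ι] (M : Finset ι) (u : ι → ℝ) (R : Finset ι) (s : ℝ) : Prop :=
  R ⊆ M ∧ ∃ p : ι → ℝ, (∀ j ∈ M \ R, 0 ≤ p j ∧ (1 ≤ p j ∨ (1 / 2 ≤ p j ∧ u j < 1) ∨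
    (u j < 2 / 3 ∧ 3 / 4 * u j ≤ p j ∧ ∀ i ∈ R, 3 / 4 * u i ≤ p j))) ∧ ∑ j ∈ M \ R, p j ≤ s

theorem Ledger.step {ι : Type*} [DecidableEq ι] {M : Finset ι} {u : ι → ℝ} {R : Finset ι} {s : ℝ}
    (h : Ledger M u R s) (j : ι) (hj : j ∈ R) (c : ℝ) (hc0 : 0 ≤ c)
    (hc : 1 ≤ c ∨ (1 / 2 ≤ c ∧ u j < 1) ∨
      (u j < 2 / 3 ∧ 3 / 4 * u j ≤ c ∧ ∀ i ∈ R, 3 / 4 * u i ≤ c)) (s' : ℝ) (hs' : s + c ≤ s') :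
    Ledger M u (R.erase j) s' := by
  obtain ⟨hRM, p, hp, hs⟩ := h
  have hset : M \ R.erase j = insert j (M \ R) := by
    ext k
    simp only [Finset.mem_sdiff, Finset.mem_erase, Finset.mem_insert]
    by_cases hk : k = j
    · subst hk; simp [hRM hj]
    · simp [hk]
  have hjn : j ∉ M \ R := by simp [hj]
  refine ⟨(Finset.erase_subset _ _).trans hRM, Function.update p j c, ?_, ?_⟩
  · intro k hk
    rw [hset, Finset.mem_insert] at hk
    by_cases hkj : k = j
    · subst hkj
      simp only [Function.update_self]
      refine ⟨hc0, ?_⟩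
      rcases hc with h | h | ⟨h1, h2, h3⟩
      · exact Or.inl h
      · exact Or.inr (Or.inl h)
      · exact Or.inr (Or.inr ⟨h1, h2, fun i hi => h3 i (Finset.mem_of_mem_erase hi)⟩)
    · simp only [Function.update_of_ne hkj]
      obtain ⟨h0, h⟩ := hp k (hk.resolve_left hkj)
      refine ⟨h0, ?_⟩
      rcases h with h | h | ⟨h1, h2, h3⟩
      · exact Or.inl h
      · exact Or.inr (Or.inl h)
      · exact Or.inr (Or.inr ⟨h1, h2, fun i hi => h3 i (Finset.mem_of_mem_erase hi)⟩)
  · rw [hset, Finset.sum_insert hjn, Function.update_self]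
    have : ∑ k ∈ M \ R, Function.update p j c k = ∑ k ∈ M \ R, p k := by
      refine Finset.sum_congr rfl fun k hk => ?_
      rw [Function.update_of_ne]
      rintro rfl
      exact hjn hk
    linarith

def APSge {ι : Type*} [DecidableEq ι] (M : Finset ι) (u : ι → ℝ) (B : ℝ) : Prop :=
  ∀ P : ι → ℝ, (∀ j ∈ M, 0 ≤ P j) →
    (∀ S ⊆ M, 5 / 3 ≤ ∑ j ∈ S, u j → 1 ≤ ∑ j ∈ S, P j) → B ≤ ∑ j ∈ M, P j

theorem sum_glue {ι : Type*} [DecidableEq ι] {M R : Finset ι} (hRM : R ⊆ M) (p g : ι → ℝ) :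
    ∑ j ∈ M, (if j ∈ R then g j else p j) = ∑ j ∈ M \ R, p j + ∑ j ∈ R, g j := by
  rw [← Finset.sum_sdiff hRM]
  congr 1
  · exact Finset.sum_congr rfl fun k hk => if_neg (Finset.mem_sdiff.mp hk).2
  · exact Finset.sum_congr rfl fun k hk => if_pos hk

theorem Ledger.use1 {ι : Type*} [DecidableEq ι] {M : Finset ι} {u : ι → ℝ} {R : Finset ι} {s B : ℝ}
    (h : Ledger M u R s) (hB : APSge M u B) (g : ι → ℝ)
    (hg : ∀ j ∈ R, 0 ≤ g j ∧ (1 ≤ g j ∨ (1 / 2 ≤ g j ∧ u j < 1) ∨ 3 / 4 * u j ≤ g j)) :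
    B ≤ s + ∑ j ∈ R, g j := by
  obtain ⟨hRM, p, hp, hs⟩ := h
  have hall : ∀ j ∈ M, 0 ≤ (if j ∈ R then g j else p j) ∧
      (1 ≤ (if j ∈ R then g j else p j) ∨ (1 / 2 ≤ (if j ∈ R then g j else p j) ∧ u j < 1) ∨
        3 / 4 * u j ≤ (if j ∈ R then g j else p j)) := by
    intro j hj
    split_ifs with hjR
    · exact hg j hjR
    · obtain ⟨h0, h⟩ := hp j (Finset.mem_sdiff.mpr ⟨hj, hjR⟩)
      refine ⟨h0, ?_⟩
      rcases h with h | h | ⟨h1, h2, h3⟩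
      · exact Or.inl h
      · exact Or.inr (Or.inl h)
      · exact Or.inr (Or.inr h2)
  have := hB (fun j => if j ∈ R then g j else p j) (fun j hj => (hall j hj).1)
    (fun S hS hS' => K1 S u _ (fun j hj => (hall j (hS hj)).1) (fun j hj => (hall j (hS hj)).2) hS')
  rw [sum_glue hRM] at this
  linarith

theorem Ledger.use2 {ι : Type*} [DecidableEq ι] {M : Finset ι} {u : ι → ℝ} {R : Finset ι} {s B : ℝ}
    (h : Ledger M u R s) (hB : APSge M u B) (g : ι → ℝ)
    (ht : ∃ t ∈ R, 1 / 3 ≤ u t)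
    (hg : ∀ j ∈ R, 0 ≤ g j ∧ ((u j < 1 / 2 ∧ 1 / 4 ≤ g j) ∨ 3 / 2 * u j ≤ g j)) :
    B ≤ s + ∑ j ∈ R, g j := by
  obtain ⟨hRM, p, hp, hs⟩ := h
  obtain ⟨t, htR, ht⟩ := ht
  have hall : ∀ j ∈ M, 0 ≤ (if j ∈ R then g j else p j) ∧
      (1 ≤ (if j ∈ R then g j else p j) ∨ (1 / 2 ≤ (if j ∈ R then g j else p j) ∧ u j < 1) ∨
        (u j < 2 / 3 ∧ 3 / 4 * u j ≤ (if j ∈ R then g j else p j) ∧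
          1 / 4 ≤ (if j ∈ R then g j else p j)) ∨
        (u j < 1 / 2 ∧ 1 / 4 ≤ (if j ∈ R then g j else p j)) ∨
        3 / 2 * u j ≤ (if j ∈ R then g j else p j)) := by
    intro j hj
    split_ifs with hjR
    · exact ⟨(hg j hjR).1, Or.inr (Or.inr (Or.inr (hg j hjR).2))⟩
    · obtain ⟨h0, h⟩ := hp j (Finset.mem_sdiff.mpr ⟨hj, hjR⟩)
      refine ⟨h0, ?_⟩
      rcases h with h | h | ⟨h1, h2, h3⟩
      · exact Or.inl h
      · exact Or.inr (Or.inl h)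
      · exact Or.inr (Or.inr (Or.inl ⟨h1, h2, by linarith [h3 t htR]⟩))
  have := hB (fun j => if j ∈ R then g j else p j) (fun j hj => (hall j hj).1)
    (fun S hS hS' => K2 S u _ (fun j hj => (hall j (hS hj)).1) (fun j hj => (hall j (hS hj)).2) hS')
  rw [sum_glue hRM] at this
  linarith

theorem win_S2 {ι : Type*} [DecidableEq ι] {M : Finset ι} {u : ι → ℝ} {B : ℝ}
    (hB : APSge M u B) (R : Finset ι) (y1 y2 a : ℝ) (h12 : y2 ≤ y1)
    (hlt : y1 + y2 < 1) (hu : ∀ j ∈ R, 0 ≤ u j ∧ u j ≤ y2) (ha : 0 ≤ a)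
    (hA : Ledger M u R (B - a - (1 - 3 / 4 * (y1 + y2)))) :
    Win 1 u R (y1 + y2) (1 - 3 / 4 * (y1 + y2)) a := by
  by_cases hbig : ∃ t ∈ R, 4 / 3 < y1 + y2 + u t
  · obtain ⟨t, htR, ht⟩ := hbig
    have htu := hu t htR
    set δ := 1 - (y1 + y2) with hδ
    have hδ0 : 0 < δ := by linarith
    have hδ9 : δ ≤ 1 / 9 := by linarith
    set r := (1 - 3 / 4 * (y1 + y2)) / (2 * δ) with hr
    have hrδ : 2 * r * δ = 1 - 3 / 4 * (y1 + y2) := by rw [hr]; field_simp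
    have hr32 : 3 / 2 ≤ r := by
      rw [hr, le_div_iff₀ (by linarith)]; linarith
    have := hA.use2 hB (fun j => if δ ≤ u j then 2 * r * δ else r * u j)
      ⟨t, htR, by linarith⟩ ?_
    · have key := win_lin 1 u (y1 + y2) δ r (by linarith) (by linarith) _ R 0 a rfl
        (fun j hj => (hu j hj).1) ha le_rfl (fun _ _ _ => rfl)
        (by
          have : 0 < r * δ := by positivity
          linarith)
      rw [hrδ] at key
      simpa using key
    · intro j hj
      have huj := hu j hj
      split_ifs with hh
      · exact ⟨by linarith, Or.inl ⟨by linarith, by linarith⟩⟩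
      · exact ⟨mul_nonneg (by linarith) huj.1, Or.inr (mul_le_mul_of_nonneg_right hr32 huj.1)⟩
  · push Not at hbig
    have := hA.use1 hB (fun j => 3 / 4 * u j)
      (fun j hj => ⟨by linarith [(hu j hj).1], Or.inr (Or.inr le_rfl)⟩)
    refine win_S3 u _ R _ a rfl ?_ ha (by linarith)
    intro j hj
    have := hu j hj
    exact ⟨this.1, by linarith, hbig j hj⟩

theorem win_S1 {ι : Type*} [DecidableEq ι] {M : Finset ι} {u : ι → ℝ} {B : ℝ}
    (hB : APSge M u B) (y1 : ℝ) (hy : y1 < 2 / 3) :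
    ∀ (m : ℕ) (R : Finset ι) (a : ℝ), R.card = m → (∀ j ∈ R, 0 ≤ u j ∧ u j ≤ y1) → 0 ≤ a →
      Ledger M u R (B - a - (1 - 3 / 4 * y1)) → Win 1 u R y1 (1 - 3 / 4 * y1) a := by
  intro m
  induction m with
  | zero =>
    intro R a hR hu ha hA
    have hR0 : R = ∅ := Finset.card_eq_zero.mp hR
    subst hR0
    have := hA.use1 hB (fun _ => 0) (by simp)
    simp only [Finset.sum_empty] at this
    linarith
  | succ m ih =>
    intro R a hR hu ha hA
    have hRne : R.Nonempty := by rw [← Finset.card_pos]; omega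
    obtain ⟨j, hj, hmax⟩ := Finset.exists_max_image R u hRne
    obtain ⟨g1, g2⟩ := hu j hj
    refine Win.bid (3 / 4 * u j) j (by linarith) (by linarith) hj ?_ ?_
    · by_cases hd : 1 ≤ y1 + u j
      · exact Win.done hd
      push Not at hd
      have e2 : 1 - 3 / 4 * y1 - 3 / 4 * u j = 1 - 3 / 4 * (y1 + u j) := by ring
      rw [e2]
      refine win_S2 hB _ y1 (u j) a g2 hd ?_ ha ?_
      · intro k hk
        have hk' := Finset.mem_of_mem_erase hk
        exact ⟨(hu k hk').1, hmax k hk'⟩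
      · exact hA.step j hj (3 / 4 * u j) (by linarith)
          (Or.inr (Or.inr ⟨by linarith, le_rfl, fun i hi => by linarith [hmax i hi]⟩)) _
          (by linarith)
    · intro j' hj' c' hc' hca
      refine ih _ _ (by rw [Finset.card_erase_of_mem hj']; omega)
        (fun k hk => hu k (Finset.mem_of_mem_erase hk)) (by linarith) ?_
      exact hA.step j' hj' c' (by linarith)
        (Or.inr (Or.inr ⟨by linarith [hmax j' hj'], by linarith [hmax j' hj'],
          fun i hi => by linarith [hmax i hi]⟩)) _ (by linarith)

theorem win_S0 {ι : Type*} [DecidableEq ι] {M : Finset ι} {u : ι → ℝ} {B : ℝ}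
    (hB : APSge M u B) :
    ∀ (m : ℕ) (R : Finset ι) (a : ℝ), R.card = m → (∀ j ∈ R, 0 ≤ u j) → 0 ≤ a →
      Ledger M u R (B - a - 1) → Win 1 u R 0 1 a := by
  intro m
  induction m with
  | zero =>
    intro R a hR hu ha hA
    have hR0 : R = ∅ := Finset.card_eq_zero.mp hR
    subst hR0
    have := hA.use1 hB (fun _ => 0) (by simp)
    simp only [Finset.sum_empty] at this
    linarith
  | succ m ih =>
    intro R a hR hu ha hA
    have hRne : R.Nonempty := by rw [← Finset.card_pos]; omega
    obtain ⟨j, hj, hmax⟩ := Finset.exists_max_image R u hRne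
    have g1 := hu j hj
    have hcard : ∀ j' ∈ R, (R.erase j').card = m := fun j' hj' => by
      rw [Finset.card_erase_of_mem hj']; omega
    have hu' : ∀ j', ∀ k ∈ R.erase j', 0 ≤ u k := fun j' k hk => hu k (Finset.mem_of_mem_erase hk)
    by_cases h1 : 1 ≤ u j
    · refine Win.bid 1 j (by linarith) (by linarith) hj (Win.done (by linarith)) ?_
      intro j' hj' c' hc' hca
      exact ih _ _ (hcard j' hj') (hu' j') (by linarith)
        (hA.step j' hj' c' (by linarith) (Or.inl hc') _ (by linarith))
    push Not at h1
    by_cases h2 : 2 / 3 ≤ u j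
    · refine Win.bid (1 / 2) j (by linarith) (by linarith) hj ?_ ?_
      · have hA' := hA.step j hj (1 / 2) (by norm_num) (Or.inr (Or.inl ⟨le_rfl, h1⟩)) _ le_rfl
        set δ := 1 - u j with hδ
        have hδ0 : 0 < δ := by linarith
        set r := (1 / 2) / (2 * δ) with hr
        have hrδ : 2 * r * δ = 1 / 2 := by rw [hr]; field_simp
        have hr34 : 3 / 4 ≤ r := by
          rw [hr, le_div_iff₀ (by linarith)]; linarith
        have := hA'.use1 hB (fun j => if δ ≤ u j then 2 * r * δ else r * u j) ?_
        · have key := win_lin 1 u (u j) δ r (by linarith) (by linarith) _ (R.erase j) 0 a rfl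
            (hu' j) ha le_rfl (fun _ _ _ => rfl) (by linarith)
          rw [hrδ] at key
          have e : (1 : ℝ) - 1 / 2 = 1 / 2 - r * 0 := by norm_num
          rw [e, zero_add]
          simpa using key
        · intro k hk
          have huk := hu' j k hk
          have := hmax k (Finset.mem_of_mem_erase hk)
          split_ifs with hh
          · exact ⟨by linarith, Or.inr (Or.inl ⟨by linarith, by linarith⟩)⟩
          · exact ⟨mul_nonneg (by linarith) huk,
              Or.inr (Or.inr (mul_le_mul_of_nonneg_right hr34 huk))⟩
      · intro j' hj' c' hc' hca
        exact ih _ _ (hcard j' hj') (hu' j') (by linarith)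
          (hA.step j' hj' c' (by linarith)
            (Or.inr (Or.inl ⟨hc', by linarith [hmax j' hj']⟩)) _ (by linarith))
    push Not at h2
    refine Win.bid (3 / 4 * u j) j (by linarith) (by linarith) hj ?_ ?_
    · rw [zero_add]
      refine win_S1 hB (u j) h2 _ _ a rfl ?_ ha ?_
      · intro k hk
        exact ⟨hu' j k hk, hmax k (Finset.mem_of_mem_erase hk)⟩
      · exact hA.step j hj (3 / 4 * u j) (by linarith)
          (Or.inr (Or.inr ⟨h2, le_rfl, fun i hi => by linarith [hmax i hi]⟩)) _
          (by linarith)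
    · intro j' hj' c' hc' hca
      refine ih _ _ (hcard j' hj') (hu' j') (by linarith) ?_
      exact hA.step j' hj' c' (by linarith)
        (Or.inr (Or.inr ⟨by linarith [hmax j' hj'], by linarith [hmax j' hj'],
          fun i hi => by linarith [hmax i hi]⟩)) _ (by linarith)

theorem aps_le {ι : Type*} [DecidableEq ι] (M : Finset ι) (w : ι → ℝ) (b : ℝ) (hb : 0 < b)
    (hw : ∀ j ∈ M, 0 ≤ w j) (p : ι → ℝ) (hp : ∀ j ∈ M, 0 ≤ p j) (hp1 : ∑ j ∈ M, p j = 1) :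
    ∃ S ⊆ M, ∑ j ∈ S, p j ≤ b ∧ APS b (fun S => ∑ j ∈ S, w j) M ≤ ∑ j ∈ S, w j := by
  obtain ⟨S, hS, hmax⟩ := Finset.exists_max_image
    (M.powerset.filter (fun S => ∑ j ∈ S, p j ≤ b)) (fun S => ∑ j ∈ S, w j)
    ⟨∅, by simp [hb.le]⟩
  simp only [Finset.mem_filter, Finset.mem_powerset] at hS hmax
  refine ⟨S, hS.1, hS.2, ?_⟩
  unfold APS
  have hbd : BddBelow {t : ℝ | ∃ p : ι → ℝ, (∀ j ∈ M, 0 ≤ p j) ∧ (∑ j ∈ M, p j) = 1 ∧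
      t = sSup {u : ℝ | ∃ S, S ⊆ M ∧ (∑ j ∈ S, p j) ≤ b ∧ u = ∑ j ∈ S, w j}} := by
    refine ⟨0, ?_⟩
    rintro t ⟨q, _, _, rfl⟩
    refine Real.sSup_nonneg ?_
    rintro u ⟨S', hS', _, rfl⟩
    exact Finset.sum_nonneg fun j hj => hw j (hS' hj)
  refine le_trans (csInf_le hbd ⟨p, hp, hp1, rfl⟩) ?_
  · refine csSup_le ⟨_, ∅, by simp, by simpa using hb.le, rfl⟩ ?_
    rintro u ⟨S', hS', h, rfl⟩
    exact hmax S' ⟨hS', h⟩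

theorem win_aps {ι : Type*} [DecidableEq ι] (M : Finset ι) (w : ι → ℝ) (b : ℝ) (hb : 0 < b)
    (hb1 : b ≤ 1) (hw : ∀ j ∈ M, 0 ≤ w j) :
    Win (3 / 5 * APS b (fun S => ∑ j ∈ S, w j) M) w M 0 b (1 - b) := by
  set z := APS b (fun S => ∑ j ∈ S, w j) M with hz
  by_cases hz0 : z ≤ 0
  · exact Win.done (by linarith)
  push Not at hz0
  set T := 3 / 5 * z with hT
  have hT0 : 0 < T := by positivity
  have hMne : M.Nonempty := by
    by_contra h
    rw [Finset.not_nonempty_iff_eq_empty] at h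
    rw [hz, h] at hz0
    simp [APS] at hz0
  have hB : APSge M (fun j => w j / T) (1 / b) := by
    intro P hP hS
    have hS' : ∀ S ⊆ M, z ≤ ∑ j ∈ S, w j → 1 ≤ ∑ j ∈ S, P j := by
      intro S h1 h2
      refine hS S h1 ?_
      rw [← Finset.sum_div, le_div_iff₀ hT0]
      linarith
    by_contra hlt
    push Not at hlt
    rw [lt_div_iff₀ hb] at hlt
    rcases (Finset.sum_nonneg hP).eq_or_lt with h0 | h0
    · obtain ⟨j0, hj0⟩ := hMne
      obtain ⟨S, hSM, _, h2⟩ := aps_le M w b hb hw (fun j => if j = j0 then 1 else 0)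
        (fun j _ => by split_ifs <;> norm_num) (by simp [hj0])
      have := hS' M subset_rfl (h2.trans
        (Finset.sum_le_sum_of_subset_of_nonneg hSM (fun j hj _ => hw j hj)))
      linarith
    · obtain ⟨S, hSM, h1, h2⟩ := aps_le M w b hb hw (fun j => P j / ∑ j ∈ M, P j)
        (fun j hj => div_nonneg (hP j hj) h0.le)
        (by rw [← Finset.sum_div]; exact div_self h0.ne')
      rw [← Finset.sum_div, div_le_iff₀ h0] at h1
      have := hS' S hSM h2
      linarith
  have h1b : 1 ≤ 1 / b := by rw [le_div_iff₀ hb]; linarith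
  have := win_S0 hB _ M (1 / b - 1) rfl (fun j hj => div_nonneg (hw j hj) hT0.le) (by linarith)
    ⟨subset_rfl, fun _ => 0, by simp, by simp⟩
  have h := this.scale T b hT0 hb
  have e1 : (fun j => T * (w j / T)) = w := by
    funext j; field_simp
  have e2 : b * (1 / b - 1) = 1 - b := by field_simp
  rw [e1, e2] at h
  simpa using h

theorem win_tps {ι : Type*} [DecidableEq ι] (M : Finset ι) (w : ι → ℝ) (b : ℝ) (hb : 0 < b)
    (hb1 : b ≤ 1) (hw : ∀ j ∈ M, 0 ≤ w j) :
    Win (1 / (2 - b) * TPS b w M) w M 0 b (1 - b) := by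
  have hclosed : IsClosed {z : ℝ | 0 ≤ z ∧ b * ∑ j ∈ M, min (w j) z = z} := by
    refine IsClosed.inter (isClosed_le continuous_const continuous_id) (isClosed_eq ?_ continuous_id)
    fun_prop
  have hne : {z : ℝ | 0 ≤ z ∧ b * ∑ j ∈ M, min (w j) z = z}.Nonempty := by
    refine ⟨0, le_rfl, ?_⟩
    rw [Finset.sum_eq_zero (fun j hj => min_eq_right (hw j hj)), mul_zero]
  have hbdd : BddAbove {z : ℝ | 0 ≤ z ∧ b * ∑ j ∈ M, min (w j) z = z} := by
    refine ⟨b * ∑ j ∈ M, w j, ?_⟩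
    rintro z ⟨_, hz⟩
    rw [← hz]
    gcongr
    exact min_le_left _ _
  obtain ⟨hz0, hz⟩ := hclosed.csSup_mem hne hbdd
  change 0 ≤ TPS b w M at hz0
  change b * ∑ j ∈ M, min (w j) (TPS b w M) = TPS b w M at hz
  set z := TPS b w M with hzdef
  rcases hz0.eq_or_lt with h0 | h0
  · rw [← h0]; exact Win.done (by simp)
  have h2b : 0 < 2 - b := by linarith
  set δ := 1 / (2 - b) * z with hδ
  have hδ0 : 0 < δ := by positivity
  have hδz : δ * (2 - b) = z := by rw [hδ]; field_simp
  set r := b / (2 * δ) with hr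
  have hr0 : 0 < r := by positivity
  have hrδ : 2 * r * δ = b := by rw [hr]; field_simp
  have hsum : 1 - b / 2 ≤ ∑ j ∈ M, (if δ ≤ w j then 2 * r * δ else r * w j) := by
    have h1 : r * ∑ j ∈ M, min (w j) z ≤ ∑ j ∈ M, (if δ ≤ w j then 2 * r * δ else r * w j) := by
      rw [Finset.mul_sum]
      refine Finset.sum_le_sum fun j hj => ?_
      split_ifs
      · have : r * min (w j) z ≤ r * z := by gcongr; exact min_le_right _ _
        have h3 : r * z = b * (2 - b) / 2 := by
          rw [← hδz]; linear_combination (2 - b) / 2 * hrδ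
        nlinarith
      · gcongr; exact min_le_left _ _
    have h2 : ∑ j ∈ M, min (w j) z = z / b := by field_simp; linarith
    have h3 : r * (z / b) = 1 - b / 2 := by
      rw [← hδz, mul_div_assoc', div_eq_iff hb.ne']; linear_combination (2 - b) / 2 * hrδ
    rw [h2, h3] at h1
    exact h1
  have key := win_lin δ w 0 δ r hr0 (by linarith) _ M 0 (1 - b) rfl hw (by linarith) le_rfl
    (fun _ _ _ => rfl) (by linarith)
  rw [hrδ] at key
  simpa using key

theorem win_kth {ι : Type*} [DecidableEq ι] (M : Finset ι) (w : ι → ℝ) (b : ℝ) (hb : 0 < b)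
    (hb1 : b ≤ 1) (hw : ∀ j ∈ M, 0 ≤ w j) :
    Win (kthHighest w M ⌊1 / b⌋₊) w M 0 b (1 - b) := by
  set k := ⌊1 / b⌋₊ with hk
  set K := kthHighest w M k with hK
  by_cases hK0 : K ≤ 0
  · exact Win.done hK0
  push Not at hK0
  have h1b : 1 ≤ 1 / b := by rw [le_div_iff₀ hb]; linarith
  have hk1 : 1 ≤ k := Nat.le_floor (by simpa using h1b)
  have hk2 : 1 < b * (k + 1) := by
    have := Nat.lt_floor_add_one (1 / b)
    rw [div_lt_iff₀ hb] at this
    linarith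
  -- the sup is attained
  have hS : ∃ S ⊆ M, S.card = k ∧ ∀ j ∈ S, K ≤ w j := by
    by_cases hne : (M.powersetCard k).Nonempty
    · have hkm : ∀ S ∈ M.powersetCard k, S.Nonempty := fun S hS => by
        rw [← Finset.card_pos, (Finset.mem_powersetCard.mp hS).2]; omega
      have hmin : ∀ S : Finset ι, ∃ m : ℝ, S ∈ M.powersetCard k →
          (∃ j ∈ S, w j = m) ∧ ∀ j ∈ S, m ≤ w j := by
        intro S
        by_cases hS : S ∈ M.powersetCard k
        · obtain ⟨j, hj, h⟩ := Finset.exists_min_image S w (hkm S hS)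
          exact ⟨w j, fun _ => ⟨⟨j, hj, rfl⟩, h⟩⟩
        · exact ⟨0, fun h => absurd h hS⟩
      choose mn hmn using hmin
      obtain ⟨S, hS, hmax⟩ := Finset.exists_max_image _ mn hne
      have hS' := Finset.mem_powersetCard.mp hS
      refine ⟨S, hS'.1, hS'.2, fun j hj => le_trans ?_ ((hmn S hS).2 j hj)⟩
      rw [hK]
      unfold kthHighest
      refine csSup_le ⟨mn S, S, hS'.1, hS'.2, (hmn S hS).2⟩ ?_
      rintro t ⟨S', h1, h2, h3⟩
      have hS'' := Finset.mem_powersetCard.mpr ⟨h1, h2⟩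
      obtain ⟨j', hj', e⟩ := (hmn S' hS'').1
      exact ((h3 j' hj').trans_eq e).trans (hmax S' hS'')
    · exfalso
      have : {t : ℝ | ∃ S ⊆ M, S.card = k ∧ ∀ j ∈ S, t ≤ w j} = ∅ := by
        ext t
        simp only [Set.mem_ofPred_eq, Set.mem_empty_iff_false, iff_false]
        rintro ⟨S, h1, h2, _⟩
        exact hne ⟨S, Finset.mem_powersetCard.mpr ⟨h1, h2⟩⟩
      rw [hK, kthHighest, this, Real.sSup_empty] at hK0
      exact lt_irrefl _ hK0
  obtain ⟨S, hSM, hSc, hSw⟩ := hS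
  refine win_full K w b hb _ M (1 - b) rfl (by linarith) ?_
  have h1 : ∑ j ∈ S, (if K ≤ w j then b else 0) = k * b := by
    rw [Finset.sum_congr rfl (fun j hj => if_pos (hSw j hj)), Finset.sum_const, hSc, nsmul_eq_mul]
  have h2 : ∑ j ∈ S, (if K ≤ w j then b else 0) ≤ ∑ j ∈ M, (if K ≤ w j then b else 0) :=
    Finset.sum_le_sum_of_subset_of_nonneg hSM (fun j _ _ => by split_ifs <;> linarith)
  linarith

/-- For `n` agents with additive valuations and arbitrary entitlements summing to 1,
there is an allocation giving every agent at least the maximum of: 3/5 of her AnyPrice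
share, 1/(2 - bᵢ) of her truncated proportional share, and the value of her
⌊1/bᵢ⌋-th highest valued item. -/
theorem aps_three_fifths_allocation {ι : Type*} [DecidableEq ι] (n : ℕ)
    (M : Finset ι) (w : Fin n → ι → ℝ) (b : Fin n → ℝ)
    (hw : ∀ i, ∀ j ∈ M, 0 ≤ w i j)
    (hb : ∀ i, 0 < b i) (hbsum : ∑ i, b i = 1) :
    ∃ A : Fin n → Finset ι, IsPartition M A ∧
      ∀ i, max (max ((3 / 5) * APS (b i) (fun S => ∑ j ∈ S, w i j) M)
            ((1 / (2 - b i)) * TPS (b i) (w i) M))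
          (kthHighest (w i) M ⌊1 / b i⌋₊)
        ≤ ∑ j ∈ A i, w i j := by
  have hn : 0 < n := by
    rcases Nat.eq_zero_or_pos n with h | h
    · subst h; simp at hbsum
    · exact h
  refine combine n hn M _ w hw _ M (fun _ => ∅) b rfl subset_rfl (by simp) (by simp) (by simp)
    (fun x hx => Or.inl hx) (fun i => (hb i).le) ?_
  intro i
  have hb1 : b i ≤ 1 := by
    rw [← hbsum]
    exact Finset.single_le_sum (fun k _ => (hb k).le) (Finset.mem_univ i)
  rw [hbsum, Finset.sum_empty]
  rcases max_choice (max ((3 / 5) * APS (b i) (fun S => ∑ j ∈ S, w i j) M)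
            ((1 / (2 - b i)) * TPS (b i) (w i) M))
          (kthHighest (w i) M ⌊1 / b i⌋₊) with h | h
  · rw [h]
    rcases max_choice ((3 / 5) * APS (b i) (fun S => ∑ j ∈ S, w i j) M)
            ((1 / (2 - b i)) * TPS (b i) (w i) M) with h' | h'
    · rw [h']; exact win_aps M (w i) (b i) (hb i) hb1 (hw i)
    · rw [h']; exact win_tps M (w i) (b i) (hb i) hb1 (hw i)
  · rw [h]; exact win_kth M (w i) (b i) (hb i) hb1 (hw i)
end

section
/- For any instance with n agents having additive valuations v_1,…,v_n over a finite set M of indivisible goods and equal entitlements b_i = 1/n for every agent, there exists an allocation (A_1,…,A_n) of M such that every agent i receives value v_i(A_i) at least the minimum of (3/4)·APS(1/n, v_i, M) and (2n/(3n−1))·TPS(1/n, v_i, M). In particular every agent receives at least a 2n/(3n−1) fraction of her AnyPrice share. -/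
open Finset

lemma aps_base {ι : Type*} [DecidableEq ι] (b : ℝ) (hb : 0 ≤ b) (w : ι → ℝ) (M : Finset ι)
    (hw : ∀ j ∈ M, 0 ≤ w j) (p : ι → ℝ) (hp : ∀ j ∈ M, 0 ≤ p j) (hs : ∑ j ∈ M, p j = 1) :
    ∃ S, S ⊆ M ∧ ∑ j ∈ S, p j ≤ b ∧ APS b (fun S => ∑ j ∈ S, w j) M ≤ ∑ j ∈ S, w j := by
  classical
  obtain ⟨S, hS, hmax⟩ := Finset.exists_max_image (M.powerset.filter (fun S => ∑ j ∈ S, p j ≤ b))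
    (fun S => ∑ j ∈ S, w j) ⟨∅, by simpa using hb⟩
  simp only [mem_filter, mem_powerset] at hS hmax
  refine ⟨S, hS.1, hS.2, ?_⟩
  unfold APS
  refine csInf_le_of_le ⟨0, ?_⟩ ⟨p, hp, hs, rfl⟩ ?_
  · rintro t ⟨q, hq, hq1, rfl⟩
    apply Real.sSup_nonneg
    rintro u ⟨T, hT, -, rfl⟩
    exact Finset.sum_nonneg fun j hj => hw j (hT hj)
  · refine csSup_le ⟨0, ∅, by simp, by simpa using hb, by simp⟩ ?_
    rintro u ⟨T, hT, hTb, rfl⟩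
    exact hmax T ⟨hT, hTb⟩

lemma aps_base2 {ι : Type*} [DecidableEq ι] (n : ℕ) (hn : 0 < n) (w : ι → ℝ) (M : Finset ι)
    (hw : ∀ j ∈ M, 0 ≤ w j) (p : ι → ℝ) (hp : ∀ j ∈ M, 0 ≤ p j) :
    ∃ S, S ⊆ M ∧ n * ∑ j ∈ S, p j ≤ ∑ j ∈ M, p j ∧
      APS (1 / (n : ℝ)) (fun S => ∑ j ∈ S, w j) M ≤ ∑ j ∈ S, w j := by
  have hn' : (0 : ℝ) < n := by exact_mod_cast hn
  rcases (Finset.sum_nonneg hp).eq_or_lt with h0 | hpos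
  · refine ⟨M, subset_rfl, by rw [← h0]; simp, ?_⟩
    rcases M.eq_empty_or_nonempty with rfl | hM
    · simp [APS]
    · obtain ⟨S, hS, -, h⟩ := aps_base (1 / (n : ℝ)) (by positivity) w M hw
        (fun _ => 1 / (M.card : ℝ)) (fun _ _ => by positivity) (by
          have : (M.card : ℝ) ≠ 0 := by exact_mod_cast hM.card_pos.ne'
          simp [this])
      exact h.trans (Finset.sum_le_sum_of_subset_of_nonneg hS fun j hj _ => hw j hj)
  · obtain ⟨S, hS, h1, h⟩ := aps_base (1 / (n : ℝ)) (by positivity) w M hw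
        (fun j => p j / ∑ j ∈ M, p j) (fun j hj => div_nonneg (hp j hj) hpos.le) (by
          rw [← Finset.sum_div, div_self hpos.ne'])
    refine ⟨S, hS, ?_, h⟩
    rw [← Finset.sum_div, div_le_div_iff₀ hpos hn'] at h1
    linarith

lemma sort_lemma {ι : Type*} [DecidableEq ι] (w : ι → ℝ) (M : Finset ι) :
    (∀ j ∈ M, 0 ≤ w j) → ∃ (pos : ι → ℕ) (f : ℕ → ℝ), Antitone f ∧ (∀ r, 0 ≤ f r) ∧
      (∀ r, M.card ≤ r → f r = 0) ∧ Set.InjOn pos M ∧ M.image pos = range M.card ∧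
      ∀ x ∈ M, f (pos x) = w x := by
  induction M using Finset.induction_on_min_value w with
  | empty =>
    intro _
    exact ⟨fun _ => 0, fun _ => 0, fun _ _ _ => le_rfl, by simp, by simp, by simp, by simp, by simp⟩
  | @insert a s ha hmin ih =>
    intro hw
    obtain ⟨pos, f, hf, hf0, hfm, hinj, him, hfw⟩ := ih (fun j hj => hw j (mem_insert_of_mem hj))
    have hlt : ∀ x ∈ s, pos x < s.card := fun x hx => by
      have := mem_image_of_mem pos hx
      rw [him] at this; simpa using this
    have hne : ∀ x ∈ s, x ≠ a := fun x hx h => ha (h ▸ hx)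
    refine ⟨Function.update pos a s.card, Function.update f s.card (w a), ?_, ?_, ?_, ?_, ?_, ?_⟩
    · apply antitone_nat_of_succ_le
      intro r
      rcases lt_trichotomy (r+1) s.card with h | h | h
      · rw [Function.update_of_ne h.ne, Function.update_of_ne (by omega)]
        exact hf (Nat.le_succ r)
      · rw [← h, Function.update_self, Function.update_of_ne (by omega)]
        have : r ∈ s.image pos := by rw [him]; simp; omega
        obtain ⟨x, hx, rfl⟩ := mem_image.1 this
        rw [hfw x hx]; exact hmin x hx
      · rw [Function.update_of_ne h.ne', hfm _ h.le]
        by_cases h2 : r = s.card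
        · subst h2; simp; exact hw a (mem_insert_self _ _)
        · rw [Function.update_of_ne h2]; exact hf0 _
    · intro r
      by_cases h2 : r = s.card
      · subst h2; simp; exact hw a (mem_insert_self _ _)
      · rw [Function.update_of_ne h2]; exact hf0 _
    · intro r hr
      rw [card_insert_of_notMem ha] at hr
      rw [Function.update_of_ne (by omega)]
      exact hfm r (by omega)
    · intro x hx y hy hxy
      simp only [coe_insert, Set.mem_insert_iff, mem_coe] at hx hy
      rcases hx with rfl | hx <;> rcases hy with rfl | hy
      · rfl
      · rw [Function.update_self, Function.update_of_ne (hne y hy)] at hxy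
        have := hlt y hy; omega
      · rw [Function.update_self, Function.update_of_ne (hne x hx)] at hxy
        have := hlt x hx; omega
      · rw [Function.update_of_ne (hne x hx), Function.update_of_ne (hne y hy)] at hxy
        exact hinj hx hy hxy
    · rw [image_insert, Function.update_self, card_insert_of_notMem ha, range_add_one, ← him]
      congr 1
      apply image_congr
      intro x hx
      exact Function.update_of_ne (hne x hx) _ _
    · intro x hx
      rcases mem_insert.1 hx with rfl | hx
      · simp
      · rw [Function.update_of_ne (hne x hx), Function.update_of_ne (hlt x hx).ne, hfw x hx]

def Solv {n : ℕ} (f : Fin n → ℕ → ℝ) (τ : Fin n → ℝ) (R : Finset (Fin n)) (U : Finset ℕ) : Prop :=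
  ∃ A : Fin n → Finset ℕ, (∀ i ∈ R, A i ⊆ U ∧ τ i ≤ ∑ r ∈ A i, f i r) ∧
    ∀ i ∈ R, ∀ j ∈ R, i ≠ j → Disjoint (A i) (A j)

lemma solv_empty {n : ℕ} (f : Fin n → ℕ → ℝ) (τ : Fin n → ℝ) (U : Finset ℕ) : Solv f τ ∅ U :=
  ⟨fun _ => ∅, by simp, by simp⟩

lemma solv_step {n : ℕ} (f : Fin n → ℕ → ℝ) (τ : Fin n → ℝ) (R : Finset (Fin n)) (U B : Finset ℕ)
    (i : Fin n) (hB : B ⊆ U) (hv : τ i ≤ ∑ r ∈ B, f i r)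
    (h : Solv f τ (R.erase i) (U \ B)) : Solv f τ R U := by
  obtain ⟨A, hA, hd⟩ := h
  have hdB : ∀ j ∈ R, j ≠ i → Disjoint (A j) B := fun j hj hji =>
    disjoint_of_subset_left (hA j (mem_erase.2 ⟨hji, hj⟩)).1 sdiff_disjoint
  refine ⟨Function.update A i B, ?_, ?_⟩
  · intro j hj
    by_cases hji : j = i
    · subst hji; simp [hB, hv]
    · rw [Function.update_of_ne hji]
      have := hA j (mem_erase.2 ⟨hji, hj⟩)
      exact ⟨this.1.trans sdiff_subset, this.2⟩
  · intro j hj k hk hjk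
    by_cases hji : j = i
    · subst hji
      rw [Function.update_self, Function.update_of_ne hjk.symm]
      exact (hdB k hk hjk.symm).symm
    · by_cases hki : k = i
      · subst hki
        rw [Function.update_self, Function.update_of_ne hji]
        exact hdB j hj hji
      · rw [Function.update_of_ne hji, Function.update_of_ne hki]
        exact hd j (mem_erase.2 ⟨hji, hj⟩) k (mem_erase.2 ⟨hki, hk⟩) hjk

lemma bag_lemma {n : ℕ} (f : Fin n → ℕ → ℝ) (τ δ : Fin n → ℝ) (k : ℕ) :
    ∀ (R : Finset (Fin n)) (P Q : Finset ℕ), R.card = k → P.card ≤ k → Disjoint P Q →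
    (∀ i ∈ R, 0 ≤ τ i) → (∀ i ∈ R, 0 ≤ δ i) → 
    (∀ i ∈ R, ∀ r ∈ P, f i r ≤ τ i) → (∀ i ∈ R, ∀ r ∈ Q, f i r ≤ δ i) →
    (∀ i ∈ R, k * (τ i + δ i) - δ i ≤ ∑ r ∈ P ∪ Q, f i r) → Solv f τ R (P ∪ Q) := by
  induction k with
  | zero =>
    intro R P Q hR _ _ _ _ _ _ _
    rw [card_eq_zero] at hR; subst hR; exact solv_empty _ _ _
  | succ k ih =>
    intro R P Q hR hP hPQ hτ hδ hfP hfQ hV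
    obtain ⟨i0, hi0⟩ : R.Nonempty := card_pos.1 (by omega)
    -- the initial bag
    obtain ⟨B, hBP, hBc, hB1⟩ : ∃ B ⊆ P, (P \ B).card ≤ k ∧ ∀ i ∈ R, ∑ r ∈ B, f i r ≤ τ i := by
      rcases P.eq_empty_or_nonempty with rfl | ⟨r, hr⟩
      · exact ⟨∅, by simp, by simp, by simpa using hτ⟩
      · refine ⟨{r}, by simpa using hr, ?_, fun i hi => by simpa using hfP i hi r hr⟩
        rw [card_sdiff_of_subset (by simpa using hr)]; simp; omega
    have hBQ : Disjoint B Q := disjoint_of_subset_left hBP hPQ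
    have hall : ∃ i ∈ R, τ i ≤ ∑ r ∈ B ∪ Q, f i r := by
      refine ⟨i0, hi0, ?_⟩
      have h1 := hV i0 hi0
      have h2 : ∑ r ∈ P \ B, f i0 r ≤ k * τ i0 := by
        calc ∑ r ∈ P \ B, f i0 r ≤ (P \ B).card • τ i0 :=
              Finset.sum_le_card_nsmul _ _ _ fun r hr => hfP i0 hi0 r (sdiff_subset hr)
          _ ≤ k * τ i0 := by
              rw [nsmul_eq_mul]
              exact mul_le_mul_of_nonneg_right (by exact_mod_cast hBc) (hτ i0 hi0)
      rw [sum_union hPQ, ← sum_sdiff hBP] at h1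
      rw [sum_union hBQ]
      push_cast at h1
      have h3 : 0 ≤ k * δ i0 := mul_nonneg (by positivity) (hδ i0 hi0)
      nlinarith
    obtain ⟨T, hT, hmin⟩ := Finset.exists_min_image
      (Q.powerset.filter fun T => ∃ i ∈ R, τ i ≤ ∑ r ∈ B ∪ T, f i r) card
      ⟨Q, by simpa using hall⟩
    simp only [mem_filter, mem_powerset] at hT hmin
    obtain ⟨hTQ, i, hi, hiT⟩ := hT
    have hBT : Disjoint B T := disjoint_of_subset_right hTQ hBQ
    have hbag : ∀ j ∈ R, ∑ r ∈ B ∪ T, f j r ≤ τ j + δ j := by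
      intro j hj
      rcases T.eq_empty_or_nonempty with rfl | ⟨r, hr⟩
      · have := hB1 j hj; have := hδ j hj; simp; linarith
      · by_contra hcon
        have h1 : ∑ r ∈ B ∪ T, f j r = ∑ r ∈ B ∪ T.erase r, f j r + f j r := by
          rw [sum_union hBT, sum_union (disjoint_of_subset_right (erase_subset _ _) hBT),
            ← Finset.sum_erase_add T _ hr]; ring
        have h2 := hfQ j hj r (hTQ hr)
        have := hmin (T.erase r) ⟨(erase_subset _ _).trans hTQ, j, hj, by linarith⟩
        have := card_erase_lt_of_mem hr
        omega
    apply solv_step f τ R (P ∪ Q) (B ∪ T) i (union_subset_union hBP hTQ) hiT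
    have hU : (P ∪ Q) \ (B ∪ T) = (P \ B) ∪ (Q \ T) := by
      ext r
      have h1 : r ∈ P → r ∉ Q := fun h h' => (Finset.disjoint_left.1 hPQ h) h'
      have h2 := @hBP r
      have h3 := @hTQ r
      simp only [mem_sdiff, mem_union]; tauto
    have hsum : ∀ j, ∑ r ∈ (P ∪ Q) \ (B ∪ T), f j r = ∑ r ∈ P ∪ Q, f j r - ∑ r ∈ B ∪ T, f j r := by
      intro j
      rw [← sum_sdiff (union_subset_union hBP hTQ)]; ring
    have hsub : ∀ j ∈ R.erase i, j ∈ R := fun j hj => mem_of_mem_erase hj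
    rw [hU] at hsum ⊢
    apply ih _ _ _ (by rw [card_erase_of_mem hi]; omega) hBc
      (disjoint_of_subset_left sdiff_subset (disjoint_of_subset_right sdiff_subset hPQ))
      (fun j hj => hτ j (hsub j hj)) (fun j hj => hδ j (hsub j hj))
      (fun j hj r hr => hfP j (hsub j hj) r (sdiff_subset hr))
      (fun j hj r hr => hfQ j (hsub j hj) r (sdiff_subset hr))
    intro j hj
    rw [hsum]
    have h1 := hV j (hsub j hj)
    have h2 := hbag j (hsub j hj)
    push_cast at h1
    linarith

lemma mid_sum (g : ℕ → ℝ) (n h : ℕ) (hh : h ≤ n) :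
    ∑ r ∈ Ico (n - h) (n + h), g r = ∑ r ∈ range h, (g (n - 1 - r) + g (n + r)) := by
  induction h with
  | zero => simp
  | succ h ih =>
    rw [sum_range_succ, ← ih (by omega), ← add_assoc, sum_Ico_succ_top (by omega),
      sum_eq_sum_Ico_succ_bot (by omega)]
    have e1 : n - (h + 1) + 1 = n - h := by omega
    have e2 : n - (h + 1) = n - 1 - h := by omega
    rw [e1, e2]; ring

lemma split_sum (g : ℕ → ℝ) (n s h K : ℕ) (h1 : s + h < n) (h2 : n + h < K) :
    ∑ r ∈ range K, g r = ∑ r ∈ range s, g r + ∑ r ∈ Ico s (n - h), g r +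
      ∑ r ∈ range h, (g (n - 1 - r) + g (n + r)) + ∑ r ∈ Ico (n + h) K, g r := by
  rw [← mid_sum g n h (by omega), range_eq_Ico, range_eq_Ico,
    sum_Ico_consecutive _ (by omega) (by omega), sum_Ico_consecutive _ (by omega) (by omega),
    sum_Ico_consecutive _ (by omega) (by omega)]

lemma price_lemma (f : ℕ → ℝ) (hf : Antitone f) (hf0 : ∀ r, 0 ≤ f r) (n s h K : ℕ) (c : ℝ)
    (h1 : s + h < n) (h2 : n + h < K)
    (haps : ∀ p : ℕ → ℝ, (∀ r, 0 ≤ p r) → ∃ S ⊆ range K, n * ∑ r ∈ S, p r ≤ ∑ r ∈ range K, p r ∧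
      c ≤ ∑ r ∈ S, f r)
    (ha : c ≤ 2 * f (n - h - 1)) (hac : f (n - h - 1) < c) :
    ((n - s - h : ℕ) : ℝ) * c ≤ ∑ r ∈ Ico s (n - h), f r + ∑ r ∈ Ico (n + h) K, f r := by
  by_contra hV
  push Not at hV
  set a := f (n - h - 1) with ha'
  set β := 1 / (2 * (c - a)) with hβ
  have hca : 0 < c - a := by linarith
  have hβ0 : 0 < β := by positivity
  have hβc : β * (c - a) = 1 / 2 := by rw [hβ]; field_simp
  set p : ℕ → ℝ := fun r => if r < s then 1 else if r < n - h then β * (f r - a) + 1 / 2 else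
    if r < n + h then 1 / 2 else β * f r with hp
  have pA : ∀ r, r < s → p r = 1 := fun r hr => by simp [hp, hr]
  have pB : ∀ r, s ≤ r → r < n - h → p r = β * (f r - a) + 1 / 2 := fun r hr hr' => by
    simp [hp, hr', not_lt.2 hr]
  have pC : ∀ r, n - h ≤ r → r < n + h → p r = 1 / 2 := fun r hr hr' => by
    simp only [hp]; rw [if_neg (by omega), if_neg (by omega), if_pos hr']
  have pD : ∀ r, n + h ≤ r → p r = β * f r := fun r hr => by
    simp only [hp]; rw [if_neg (by omega), if_neg (by omega), if_neg (by omega)]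
  have fB : ∀ r, r < n - h → a ≤ f r := fun r hr => hf (by omega)
  have fC : ∀ r, n - h ≤ r → f r ≤ a := fun r hr => hf (by omega)
  have phalf : ∀ r, r < n + h → 1 / 2 ≤ p r := by
    intro r hr
    by_cases c1 : r < s
    · rw [pA r c1]; norm_num
    · by_cases c2 : r < n - h
      · rw [pB r (by omega) c2]
        have := mul_nonneg hβ0.le (sub_nonneg.2 (fB r c2)); linarith
      · rw [pC r (by omega) hr]
  have p0 : ∀ r, 0 ≤ p r := by
    intro r
    by_cases c1 : r < n + h
    · linarith [phalf r c1]
    · rw [pD r (by omega)]; exact mul_nonneg hβ0.le (hf0 r)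
  obtain ⟨S, hS, hSp, hSv⟩ := haps p p0
  have htot : ∑ r ∈ range K, p r < n := by
    rw [split_sum p n s h K h1 h2]
    have e1 : ∑ r ∈ range s, p r = s := by
      rw [sum_congr rfl fun r hr => pA r (mem_range.1 hr)]; simp
    have e2 : ∑ r ∈ Ico s (n - h), p r =
        β * ∑ r ∈ Ico s (n - h), f r + ((n - s - h : ℕ) : ℝ) * (1 / 2 - β * a) := by
      rw [sum_congr rfl fun r hr => pB r (mem_Ico.1 hr).1 (mem_Ico.1 hr).2, mul_sum]
      have : ∀ r, β * (f r - a) + 1 / 2 = β * f r + (1 / 2 - β * a) := fun r => by ring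
      simp only [this]
      rw [sum_add_distrib, sum_const, Nat.card_Ico, nsmul_eq_mul]
      have e : n - h - s = n - s - h := by omega
      rw [e]
    have e3 : ∑ r ∈ range h, (p (n - 1 - r) + p (n + r)) = h := by
      have : ∀ r ∈ range h, p (n - 1 - r) + p (n + r) = 1 := by
        intro r hr
        have := mem_range.1 hr
        rw [pC _ (by omega) (by omega), pC _ (by omega) (by omega)]; norm_num
      rw [sum_congr rfl this]; simp
    have e4 : ∑ r ∈ Ico (n + h) K, p r = β * ∑ r ∈ Ico (n + h) K, f r := by
      rw [sum_congr rfl fun r hr => pD r (mem_Ico.1 hr).1, mul_sum]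
    rw [e1, e2, e3, e4]
    have hk : (n : ℝ) = s + h + ((n - s - h : ℕ) : ℝ) := by
      have : n = s + h + (n - s - h) := by omega
      exact_mod_cast this
    rw [hk]
    have := mul_lt_mul_of_pos_left hV hβ0
    set k : ℝ := ((n - s - h : ℕ) : ℝ)
    have h5 : β * (k * c) = k * (1 / 2) + k * (β * a) := by rw [← hβc]; ring
    linarith
  have hn : (0 : ℝ) < n := by exact_mod_cast (by omega : 0 < n)
  have hS1 : ∑ r ∈ S, p r < 1 := by
    by_contra hcon
    push Not at hcon
    nlinarith
  have hno : ∀ r ∈ S, s ≤ r := by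
    intro r hr
    by_contra hcon
    have := single_le_sum (fun r _ => p0 r) hr
    rw [pA r (by omega)] at this
    linarith
  by_cases hex : ∃ r ∈ S, r < n + h
  · obtain ⟨r, hr, hrn⟩ := hex
    have hrest : ∀ q ∈ S.erase r, n + h ≤ q := by
      intro q hq
      by_contra hcon
      have h3 := single_le_sum (fun r _ => p0 r) hq
      have h4 := Finset.add_sum_erase S p hr
      have := phalf r hrn
      have := phalf q (by omega)
      linarith
    have h4 := Finset.add_sum_erase S p hr
    have h5 := Finset.add_sum_erase S f hr
    have h6 : ∑ q ∈ S.erase r, p q = β * ∑ q ∈ S.erase r, f q := by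
      rw [sum_congr rfl fun q hq => pD q (hrest q hq), mul_sum]
    by_cases hrt : r < n - h
    · rw [pB r (hno r hr) hrt] at h4
      have : β * (c - a) ≤ β * (∑ q ∈ S, f q - a) :=
        mul_le_mul_of_nonneg_left (by linarith) hβ0.le
      rw [← h5] at this
      nlinarith
    · rw [pC r (by omega) hrn] at h4
      have := fC r (by omega)
      have : β * (c - a) ≤ β * (∑ q ∈ S.erase r, f q) :=
        mul_le_mul_of_nonneg_left (by linarith) hβ0.le
      linarith
  · push Not at hex
    have h6 : ∑ q ∈ S, p q = β * ∑ q ∈ S, f q := by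
      rw [sum_congr rfl fun q hq => pD q (hex q hq), mul_sum]
    have : β * (2 * (c - a)) ≤ β * (∑ q ∈ S, f q) :=
      mul_le_mul_of_nonneg_left (by linarith) hβ0.le
    linarith

lemma agent_lemma (f : ℕ → ℝ) (hf : Antitone f) (hf0 : ∀ r, 0 ≤ f r) (n s h K : ℕ) (τ : ℝ)
    (h1 : s + h < n) (h2 : n + h < K)
    (haps : ∀ p : ℕ → ℝ, (∀ r, 0 ≤ p r) → ∃ S ⊆ range K, n * ∑ r ∈ S, p r ≤ ∑ r ∈ range K, p r ∧
      4 / 3 * τ ≤ ∑ r ∈ S, f r)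
    (hz : ∃ z, n * z ≤ ∑ r ∈ range K, min (f r) z ∧ (3 * n - 1) * τ ≤ 2 * n * z)
    (hs : f s < τ) (hpair : f (n - h - 1) + f (n + h) < τ) :
    ∃ δ, 0 ≤ δ ∧ (∀ r, n + h ≤ r → f r ≤ δ) ∧
      ((n - s - h : ℕ) : ℝ) * (τ + δ) - δ ≤
        ∑ r ∈ Ico s (n - h) ∪ Ico (n + h) K, f r := by
  have hτ : 0 < τ := (hf0 s).trans_lt hs
  have hk1 : (1 : ℝ) ≤ ((n - s - h : ℕ) : ℝ) := by exact_mod_cast (by omega : 1 ≤ n - s - h)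
  have hk : (n : ℝ) = s + h + ((n - s - h : ℕ) : ℝ) := by
    have : n = s + h + (n - s - h) := by omega
    exact_mod_cast this
  have hn : (0 : ℝ) < n := by exact_mod_cast (by omega : 0 < n)
  rw [sum_union (by
    rw [Finset.disjoint_left]; intro r hr hr'; simp at hr hr'; omega)]
  have hle : f (n + h) ≤ f (n - h - 1) := hf (by omega)
  by_cases hc : ∀ r ∈ range h, f (n - 1 - r) + f (n + r) ≤ 3 / 2 * τ
  · refine ⟨τ / 2, by positivity, fun r hr => ?_, ?_⟩
    · have := hf hr; linarith
    obtain ⟨z, hz1, hz2⟩ := hz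
    rw [split_sum _ n s h K h1 h2] at hz1
    have e1 : ∑ r ∈ range s, min (f r) z ≤ s * z := by
      calc _ ≤ ∑ r ∈ range s, z := sum_le_sum fun r _ => min_le_right _ _
        _ = s * z := by simp
    have e2 : ∑ r ∈ Ico s (n - h), min (f r) z ≤ ∑ r ∈ Ico s (n - h), f r :=
      sum_le_sum fun r _ => min_le_left _ _
    have e4 : ∑ r ∈ Ico (n + h) K, min (f r) z ≤ ∑ r ∈ Ico (n + h) K, f r :=
      sum_le_sum fun r _ => min_le_left _ _
    have e3 : ∑ r ∈ range h, (min (f (n - 1 - r)) z + min (f (n + r)) z) ≤ h * (3 / 2 * τ) := by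
      calc _ ≤ ∑ r ∈ range h, (3 / 2 * τ) := sum_le_sum fun r hr =>
            (add_le_add (min_le_left _ _) (min_le_left _ _)).trans (hc r hr)
        _ = _ := by simp
    set V := ∑ r ∈ Ico s (n - h), f r + ∑ r ∈ Ico (n + h) K, f r
    set k : ℝ := ((n - s - h : ℕ) : ℝ)
    have hs0 : (0 : ℝ) ≤ s := by positivity
    have hh0 : (0 : ℝ) ≤ h := by positivity
    have hVz : (n - s) * z - h * (3 / 2 * τ) ≤ V := by linarith
    have hns : (0 : ℝ) ≤ n - s := by linarith
    have h5 : (n - s) * ((3 * n - 1) * τ) ≤ (n - s) * (2 * n * z) :=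
      mul_le_mul_of_nonneg_left hz2 hns
    have h6 : (n - s : ℝ) * τ ≤ n * τ := mul_le_mul_of_nonneg_right (by linarith) hτ.le
    have h7 : 2 * n * (3 / 2 * (n - s) * τ - τ / 2) ≤ 2 * n * ((n - s) * z) := by nlinarith
    have h8 := le_of_mul_le_mul_left h7 (by positivity)
    have h9 : (n : ℝ) - s = h + k := by linarith
    rw [h9] at h8 hVz
    linarith
  · push Not at hc
    obtain ⟨r, hr, hbig⟩ := hc
    have hr := mem_range.1 hr
    have g1 : f (n + r) ≤ f (n - 1 - r) := hf (by omega)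
    have g2 : f (n - 1 - r) ≤ f (n - h - 1) := hf (by omega)
    have g3 : f (n - h - 1) ≤ f s := hf (by omega)
    have := price_lemma f hf hf0 n s h K (4 / 3 * τ) h1 h2 haps (by linarith) (by linarith)
    refine ⟨τ / 4, by positivity, fun r hr => ?_, ?_⟩
    · have := hf hr; linarith
    · nlinarith

lemma phase2 {n : ℕ} (f : Fin n → ℕ → ℝ) (hf : ∀ i, Antitone (f i)) (hf0 : ∀ i r, 0 ≤ f i r)
    (K s : ℕ) (hK : 2 * n < K) (τ : Fin n → ℝ)
    (haps : ∀ i, ∀ p : ℕ → ℝ, (∀ r, 0 ≤ p r) →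
      ∃ S ⊆ range K, n * ∑ r ∈ S, p r ≤ ∑ r ∈ range K, p r ∧ 4 / 3 * τ i ≤ ∑ r ∈ S, f i r)
    (hz : ∀ i, ∃ z, n * z ≤ ∑ r ∈ range K, min (f i r) z ∧ (3 * n - 1) * τ i ≤ 2 * n * z)
    (k : ℕ) : ∀ (h : ℕ) (R : Finset (Fin n)), R.card = k → s + h + k = n →
      (∀ i ∈ R, f i s < τ i) → Solv f τ R (Ico s (n - h) ∪ Ico (n + h) K) := by
  induction k with
  | zero =>
    intro h R hR _ _
    rw [card_eq_zero] at hR; subst hR; exact solv_empty _ _ _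
  | succ k ih =>
    intro h R hR hk hs
    by_cases hex : ∃ i ∈ R, τ i ≤ f i (n - h - 1) + f i (n + h)
    · obtain ⟨i, hi, hv⟩ := hex
      apply solv_step f τ R _ {n - h - 1, n + h} i
      · intro r hr
        simp at hr ⊢; omega
      · rw [sum_pair (by omega)]; exact hv
      · have := ih (h + 1) (R.erase i) (by rw [card_erase_of_mem hi]; omega) (by omega)
          (fun j hj => hs j (mem_of_mem_erase hj))
        convert this using 1
        ext r
        simp only [mem_sdiff, mem_union, mem_Ico, mem_insert, mem_singleton]; omega
    · push Not at hex
      have key : ∀ i ∈ R, _ := fun i hi => agent_lemma (f i) (hf i) (hf0 i) n s h K (τ i)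
        (by omega) (by omega) (haps i) (hz i) (hs i hi) (hex i hi)
      have key2 : ∀ i, ∃ δ, i ∈ R → 0 ≤ δ ∧ (∀ r, n + h ≤ r → f i r ≤ δ) ∧
          ((n - s - h : ℕ) : ℝ) * (τ i + δ) - δ ≤
          ∑ r ∈ Ico s (n - h) ∪ Ico (n + h) K, f i r := by
        intro i
        by_cases hi : i ∈ R
        · obtain ⟨δ, hδ⟩ := key i hi
          exact ⟨δ, fun _ => hδ⟩
        · exact ⟨0, fun h => absurd h hi⟩
      choose δ hδ using key2
      have e : n - s - h = k + 1 := by omega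
      rw [e] at hδ
      apply bag_lemma f τ δ (k + 1) R _ _ hR (by simp; omega)
      · rw [Finset.disjoint_left]; intro r hr hr'; simp at hr hr'; omega
      · exact fun i hi => (hf0 i s).trans (hs i hi).le
      · exact fun i hi => (hδ i hi).1
      · intro i hi r hr
        exact (hf i (mem_Ico.1 hr).1).trans (hs i hi).le
      · intro i hi r hr
        exact (hδ i hi).2.1 r (mem_Ico.1 hr).1
      · exact fun i hi => (hδ i hi).2.2

lemma phase1 {n : ℕ} (f : Fin n → ℕ → ℝ) (hf : ∀ i, Antitone (f i)) (hf0 : ∀ i r, 0 ≤ f i r)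
    (K : ℕ) (hK : 2 * n < K) (τ : Fin n → ℝ)
    (haps : ∀ i, ∀ p : ℕ → ℝ, (∀ r, 0 ≤ p r) →
      ∃ S ⊆ range K, n * ∑ r ∈ S, p r ≤ ∑ r ∈ range K, p r ∧ 4 / 3 * τ i ≤ ∑ r ∈ S, f i r)
    (hz : ∀ i, ∃ z, n * z ≤ ∑ r ∈ range K, min (f i r) z ∧ (3 * n - 1) * τ i ≤ 2 * n * z)
    (k : ℕ) : ∀ (s : ℕ) (R : Finset (Fin n)), R.card = k → s + k = n →
      Solv f τ R (Ico s K) := by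
  induction k with
  | zero =>
    intro s R hR _
    rw [card_eq_zero] at hR; subst hR; exact solv_empty _ _ _
  | succ k ih =>
    intro s R hR hk
    by_cases hex : ∃ i ∈ R, τ i ≤ f i s
    · obtain ⟨i, hi, hv⟩ := hex
      apply solv_step f τ R _ {s} i
      · intro r hr
        simp at hr ⊢; omega
      · simpa using hv
      · have := ih (s + 1) (R.erase i) (by rw [card_erase_of_mem hi]; omega) (by omega)
        convert this using 1
        ext r
        simp only [mem_sdiff, mem_Ico, mem_singleton]; omega
    · push Not at hex
      have := phase2 f hf hf0 K s hK τ haps hz (k + 1) 0 R hR (by omega) hex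
      convert this using 1
      ext r
      simp only [mem_union, mem_Ico]; omega

lemma aps_pos {ι : Type*} [DecidableEq ι] (n : ℕ) (hn : 0 < n) (w : ι → ℝ) (M : Finset ι)
    (hw : ∀ j ∈ M, 0 ≤ w j) (pos : ι → ℕ) (f : ℕ → ℝ) (hinj : Set.InjOn pos M)
    (him : M.image pos = range M.card) (hfw : ∀ x ∈ M, f (pos x) = w x) (K : ℕ) (hK : M.card ≤ K)
    (p : ℕ → ℝ) (hp : ∀ r, 0 ≤ p r) :
    ∃ S ⊆ range K, n * ∑ r ∈ S, p r ≤ ∑ r ∈ range K, p r ∧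
      APS (1 / (n : ℝ)) (fun S => ∑ j ∈ S, w j) M ≤ ∑ r ∈ S, f r := by
  obtain ⟨S, hS, h1, h2⟩ := aps_base2 n hn w M hw (fun x => p (pos x)) (fun _ _ => hp _)
  have hsub : range M.card ⊆ range K := range_subset_range.2 hK
  have hinjS : Set.InjOn pos S := hinj.mono (by exact_mod_cast hS)
  refine ⟨S.image pos, ?_, ?_, ?_⟩
  · exact (image_subset_image hS).trans (him ▸ hsub)
  · rw [sum_image hinjS]
    refine h1.trans ?_
    rw [← sum_image (f := p) hinj, him]
    exact sum_le_sum_of_subset_of_nonneg hsub fun r _ _ => hp r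
  · rw [sum_image hinjS, sum_congr rfl fun x hx => hfw x (hS hx)]
    exact h2

lemma aps_trunc {ι : Type*} [DecidableEq ι] (n : ℕ) (hn : 0 < n) (w : ι → ℝ) (M : Finset ι)
    (hw : ∀ j ∈ M, 0 ≤ w j) :
    let z := APS (1 / (n : ℝ)) (fun S => ∑ j ∈ S, w j) M
    n * z ≤ ∑ j ∈ M, min (w j) z := by
  intro z
  have hn' : (0 : ℝ) < n := by exact_mod_cast hn
  by_contra hcon
  push Not at hcon
  have hz : 0 < z := by
    by_contra hz
    push Not at hz
    have : ∑ j ∈ M, min (w j) z = M.card * z := by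
      rw [sum_congr rfl fun j hj => min_eq_right (hz.trans (hw j hj))]; simp
    have hz0 : 0 ≤ z := by
      apply Real.sInf_nonneg
      rintro t ⟨q, hq, hq1, rfl⟩
      apply Real.sSup_nonneg
      rintro u ⟨T, hT, -, rfl⟩
      exact Finset.sum_nonneg fun j hj => hw j (hT hj)
    have : z = 0 := le_antisymm hz hz0
    simp_all
  obtain ⟨S, hS, h1, h2⟩ := aps_base2 n hn w M hw (fun j => min (w j) z)
    (fun j hj => le_min (hw j hj) hz.le)
  have h3 : ∑ j ∈ S, min (w j) z < z := by
    by_contra h; push Not at h; nlinarith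
  have h4 : ∀ j ∈ S, min (w j) z = w j := by
    intro j hj
    by_contra hne
    have hjz : min (w j) z = z := (min_choice (w j) z).resolve_left hne
    have := single_le_sum (f := fun j => min (w j) z)
      (fun j hj => le_min (hw j (hS hj)) hz.le) hj
    simp only [hjz] at this
    linarith
  rw [sum_congr rfl h4] at h3
  exact absurd h2 (not_le.2 h3)

lemma tps_mem {ι : Type*} (n : ℕ) (hn : 0 < n) (w : ι → ℝ) (M : Finset ι)
    (hw : ∀ j ∈ M, 0 ≤ w j) :
    n * TPS (1 / (n : ℝ)) w M ≤ ∑ j ∈ M, min (w j) (TPS (1 / (n : ℝ)) w M) := by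
  have hn' : (0 : ℝ) < n := by exact_mod_cast hn
  have hmem : TPS (1 / (n : ℝ)) w M ∈
      {z : ℝ | 0 ≤ z ∧ 1 / (n : ℝ) * ∑ j ∈ M, min (w j) z = z} := by
    apply IsClosed.csSup_mem
    · refine IsClosed.inter isClosed_Ici (isClosed_eq ?_ ?_) <;> fun_prop
    · refine ⟨0, le_rfl, ?_⟩
      rw [sum_congr rfl fun j hj => min_eq_right (hw j hj)]; simp
    · refine ⟨1 / (n : ℝ) * ∑ j ∈ M, w j, ?_⟩
      rintro z ⟨-, hz⟩
      rw [← hz]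
      exact mul_le_mul_of_nonneg_left (sum_le_sum fun j _ => min_le_left _ _) (by positivity)
  have := hmem.2
  field_simp at this
  linarith

lemma cut_lemma {ι : Type*} [DecidableEq ι] (w : ι → ℝ) (M : Finset ι)
    (hw : ∀ j ∈ M, 0 ≤ w j) :
    ∃ S ⊆ M, APS (1 / ((2 : ℕ) : ℝ)) (fun S => ∑ j ∈ S, w j) M ≤ ∑ j ∈ S, w j ∧
      APS (1 / ((2 : ℕ) : ℝ)) (fun S => ∑ j ∈ S, w j) M ≤ ∑ j ∈ M \ S, w j := by
  obtain ⟨S, hS, h1, h2⟩ := aps_base2 2 (by norm_num) w M hw w hw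
  refine ⟨S, hS, h2, ?_⟩
  have := sum_sdiff (f := w) hS
  push_cast at h1 h2 ⊢
  linarith

lemma aps_nonneg {ι : Type*} (b : ℝ) (w : ι → ℝ) (M : Finset ι)
    (hw : ∀ j ∈ M, 0 ≤ w j) : 0 ≤ APS b (fun S => ∑ j ∈ S, w j) M := by
  apply Real.sInf_nonneg
  rintro t ⟨q, hq, hq1, rfl⟩
  apply Real.sSup_nonneg
  rintro u ⟨T, hT, -, rfl⟩
  exact Finset.sum_nonneg fun j hj => hw j (hT hj)

lemma aps_prop {ι : Type*} [DecidableEq ι] (n : ℕ) (hn : 0 < n) (w : ι → ℝ) (M : Finset ι)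
    (hw : ∀ j ∈ M, 0 ≤ w j) :
    n * APS (1 / (n : ℝ)) (fun S => ∑ j ∈ S, w j) M ≤ ∑ j ∈ M, w j :=
  (aps_trunc n hn w M hw).trans (sum_le_sum fun j _ => min_le_left _ _)

lemma unsort {ι : Type*} [DecidableEq ι] {n : ℕ} (hn : 0 < n) (M : Finset ι) (w : Fin n → ι → ℝ)
    (pos : Fin n → ι → ℕ) (f : Fin n → ℕ → ℝ) (hf : ∀ i, Antitone (f i))
    (hfm : ∀ i r, M.card ≤ r → f i r = 0) (hf0 : ∀ i r, 0 ≤ f i r)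
    (hinj : ∀ i, Set.InjOn (pos i) M)
    (him : ∀ i, M.image (pos i) = range M.card) (hfw : ∀ i, ∀ x ∈ M, f i (pos i x) = w i x)
    (τ : Fin n → ℝ) (U : Finset ℕ) (h : Solv f τ univ U) :
    ∃ A : Fin n → Finset ι, IsPartition M A ∧ ∀ i, τ i ≤ ∑ j ∈ A i, w i j := by
  classical
  obtain ⟨A, hA, hd⟩ := h
  obtain ⟨o, ho⟩ : ∃ o : ℕ → Fin n, ∀ i, ∀ r ∈ A i, o r = i := by
    refine ⟨fun r => if h : ∃ i, r ∈ A i then h.choose else ⟨0, hn⟩, ?_⟩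
    intro i r hr
    have h : ∃ i, r ∈ A i := ⟨i, hr⟩
    simp only [h, dif_pos]
    by_contra hne
    exact Finset.disjoint_left.1 (hd _ (mem_univ _) _ (mem_univ _) hne) h.choose_spec hr
  set m := M.card with hm
  let t : Fin m → Finset ι := fun r => M.filter fun x => pos (o r) x ≤ r
  have ht : ∀ r : Fin m, (t r).card = r + 1 := by
    intro r
    have h1 : (t r).image (pos (o r)) = range (r + 1) := by
      ext q
      simp only [t, mem_image, mem_filter, mem_range]
      constructor
      · rintro ⟨x, ⟨-, hx⟩, rfl⟩; omega
      · intro hq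
        have : q ∈ M.image (pos (o r)) := by rw [him]; simp; omega
        obtain ⟨x, hx, rfl⟩ := mem_image.1 this
        exact ⟨x, ⟨hx, by omega⟩, rfl⟩
    rw [← card_range (r + 1 : ℕ), ← h1, card_image_of_injOn]
    exact (hinj _).mono (by intro x hx; simp [t] at hx; exact hx.1)
  obtain ⟨g, ginj, hg⟩ := (Finset.all_card_le_biUnion_card_iff_exists_injective t).1 (by
    intro s
    rcases s.eq_empty_or_nonempty with rfl | hs
    · simp
    · have h1 : s ⊆ Finset.Iic (s.max' hs) := fun r hr => by simpa using s.le_max' r hr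
      have h2 := card_le_card h1
      rw [Fin.card_Iic, ← ht] at h2
      exact h2.trans (card_le_card (subset_biUnion_of_mem t (s.max'_mem hs))))
  have hgM : ∀ r, g r ∈ M := fun r => (mem_filter.1 (hg r)).1
  have himg : univ.image g = M := by
    apply eq_of_subset_of_card_le
    · intro x hx
      obtain ⟨r, -, rfl⟩ := mem_image.1 hx
      exact hgM r
    · rw [card_image_of_injective _ ginj]; simp [hm]
  refine ⟨fun i => (univ.filter fun r : Fin m => o r = i).image g, ⟨?_, ?_, ?_⟩, ?_⟩
  · intro i x hx
    obtain ⟨r, -, rfl⟩ := mem_image.1 hx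
    exact hgM r
  · intro i j hij
    rw [Finset.disjoint_left]
    intro x hx hx'
    obtain ⟨r, hr, rfl⟩ := mem_image.1 hx
    obtain ⟨q, hq, hqr⟩ := mem_image.1 hx'
    have := ginj hqr
    subst this
    simp at hr hq
    exact hij (hr.symm.trans hq)
  · intro x hx
    rw [← himg] at hx
    obtain ⟨r, -, rfl⟩ := mem_image.1 hx
    exact ⟨o r, mem_image_of_mem _ (by simp)⟩
  · intro i
    rw [sum_image ginj.injOn]
    refine (hA i (mem_univ i)).2.trans ?_
    calc ∑ r ∈ A i, f i r = ∑ r ∈ (A i).filter (· < m), f i r := by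
          rw [sum_filter_of_ne]
          intro r _ hr
          by_contra hcon
          exact hr (hfm i r (by omega))
      _ ≤ ∑ r ∈ (univ.filter fun r : Fin m => o r = i).image Fin.val, f i r := by
          apply sum_le_sum_of_subset_of_nonneg
          · intro r hr
            obtain ⟨h1, h2⟩ := mem_filter.1 hr
            exact mem_image.2 ⟨⟨r, h2⟩, by simpa using ho i r h1, rfl⟩
          · exact fun r _ _ => hf0 i r
      _ = ∑ r ∈ univ.filter fun r : Fin m => o r = i, f i r := by
          rw [sum_image Fin.val_injective.injOn]
      _ ≤ _ := by
          apply sum_le_sum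
          intro r hr
          have h1 : o r = i := by simpa using hr
          have h2 := (mem_filter.1 (hg r)).2
          rw [h1] at h2
          rw [← hfw i _ (hgM r)]
          exact hf i h2

lemma main_three {ι : Type*} [DecidableEq ι] (n : ℕ) (hn : 3 ≤ n)
    (M : Finset ι) (w : Fin n → ι → ℝ) (hw : ∀ i, ∀ j ∈ M, 0 ≤ w i j) :
    ∃ A : Fin n → Finset ι, IsPartition M A ∧
      ∀ i, max (min ((3 / 4) * APS (1 / (n : ℝ)) (fun S => ∑ j ∈ S, w i j) M)
            ((2 * (n : ℝ) / (3 * (n : ℝ) - 1)) * TPS (1 / (n : ℝ)) (w i) M))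
        ((2 * (n : ℝ) / (3 * (n : ℝ) - 1)) * APS (1 / (n : ℝ)) (fun S => ∑ j ∈ S, w i j) M)
          ≤ ∑ j ∈ A i, w i j := by
  have hn0 : 0 < n := by omega
  have hn3 : (3 : ℝ) ≤ n := by exact_mod_cast hn
  choose pos f hf hf0 hfm hinj him hfw using fun i => sort_lemma (w i) M (hw i)
  have hρ : 2 * (n : ℝ) / (3 * (n : ℝ) - 1) ≤ 3 / 4 := by
    rw [div_le_div_iff₀ (by linarith) (by norm_num)]; linarith
  have hsum : ∀ i z, 0 ≤ z → ∑ j ∈ M, min (w i j) z ≤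
      ∑ r ∈ range (M.card + 2 * n + 1), min (f i r) z := by
    intro i z hz
    rw [sum_congr rfl fun j hj => by rw [← hfw i j hj],
      ← sum_image (f := fun r => min (f i r) z) (hinj i), him]
    exact sum_le_sum_of_subset_of_nonneg (range_subset_range.2 (by omega))
      fun r _ _ => le_min (hf0 i r) hz
  have hT0 : ∀ i, 0 ≤ TPS (1 / (n : ℝ)) (w i) M := fun i =>
    Real.sSup_nonneg fun z hz => hz.1
  have hcancel : ∀ z : ℝ, (3 * (n : ℝ) - 1) * (2 * (n : ℝ) / (3 * (n : ℝ) - 1) * z) = 2 * n * z := by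
    intro z
    have : 3 * (n : ℝ) - 1 ≠ 0 := by linarith
    field_simp
  refine unsort hn0 M w pos f hf hfm hf0 hinj him hfw _ (Ico 0 (M.card + 2 * n + 1)) ?_
  apply phase1 f hf hf0 (M.card + 2 * n + 1) (by omega) _ _ _ n 0 univ (by simp) (by omega)
  · intro i p hp
    obtain ⟨S, hS, h1, h2⟩ := aps_pos n hn0 (w i) M (hw i) (pos i) (f i) (hinj i) (him i) (hfw i)
      (M.card + 2 * n + 1) (by omega) p hp
    refine ⟨S, hS, h1, le_trans ?_ h2⟩
    have h0 := aps_nonneg (1 / (n : ℝ)) (w i) M (hw i)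
    have : max (min ((3 / 4) * APS (1 / (n : ℝ)) (fun S => ∑ j ∈ S, w i j) M)
            ((2 * (n : ℝ) / (3 * (n : ℝ) - 1)) * TPS (1 / (n : ℝ)) (w i) M))
        ((2 * (n : ℝ) / (3 * (n : ℝ) - 1)) * APS (1 / (n : ℝ)) (fun S => ∑ j ∈ S, w i j) M)
        ≤ 3 / 4 * APS (1 / (n : ℝ)) (fun S => ∑ j ∈ S, w i j) M :=
      max_le (min_le_left _ _) (mul_le_mul_of_nonneg_right hρ h0)
    linarith
  · intro i
    rcases le_total (min ((3 / 4) * APS (1 / (n : ℝ)) (fun S => ∑ j ∈ S, w i j) M)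
            ((2 * (n : ℝ) / (3 * (n : ℝ) - 1)) * TPS (1 / (n : ℝ)) (w i) M))
        ((2 * (n : ℝ) / (3 * (n : ℝ) - 1)) * APS (1 / (n : ℝ)) (fun S => ∑ j ∈ S, w i j) M)
      with h | h
    · refine ⟨_, (aps_trunc n hn0 (w i) M (hw i)).trans
        (hsum i _ (aps_nonneg _ _ _ (hw i))), ?_⟩
      rw [max_eq_right h, hcancel]
    · refine ⟨_, (tps_mem n hn0 (w i) M (hw i)).trans (hsum i _ (hT0 i)), ?_⟩
      rw [max_eq_left h, ← hcancel]
      exact mul_le_mul_of_nonneg_left (min_le_right _ _) (by linarith)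

lemma main_small {ι : Type*} [DecidableEq ι] (n : ℕ) (hn : 0 < n) (hn2 : n ≤ 2)
    (M : Finset ι) (w : Fin n → ι → ℝ) (hw : ∀ i, ∀ j ∈ M, 0 ≤ w i j) :
    ∃ A : Fin n → Finset ι, IsPartition M A ∧
      ∀ i, APS (1 / (n : ℝ)) (fun S => ∑ j ∈ S, w i j) M ≤ ∑ j ∈ A i, w i j := by
  interval_cases n
  · refine ⟨fun _ => M, ⟨fun _ => subset_rfl, fun i j hij => absurd (Subsingleton.elim i j) hij,
      fun x hx => ⟨0, hx⟩⟩, fun i => ?_⟩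
    have := aps_prop 1 (by norm_num) (w i) M (hw i)
    push_cast at this ⊢
    linarith
  · obtain ⟨S, hS, h1, h2⟩ := cut_lemma (w 0) M (hw 0)
    have h3 := aps_prop 2 (by norm_num) (w 1) M (hw 1)
    have h4 := sum_sdiff (f := w 1) hS
    have fin : ∀ X Y : Finset ι, X ⊆ M → Y ⊆ M → Disjoint X Y → X ∪ Y = M →
        IsPartition M (![X, Y]) := by
      intro X Y hX hY hXY hu
      refine ⟨?_, ?_, ?_⟩
      · intro i; fin_cases i <;> simpa
      · intro i j hij
        fin_cases i <;> fin_cases j <;> simp_all [disjoint_comm]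
      · intro x hx
        rw [← hu] at hx
        rcases mem_union.1 hx with h | h
        · exact ⟨0, h⟩
        · exact ⟨1, h⟩
    push_cast at h1 h2 h3 ⊢
    rcases le_total (∑ j ∈ S, w 1 j) (∑ j ∈ M \ S, w 1 j) with h | h
    · refine ⟨![S, M \ S], fin _ _ hS sdiff_subset disjoint_sdiff (union_sdiff_of_subset hS), ?_⟩
      rw [Fin.forall_fin_two]
      refine ⟨h1, ?_⟩
      simp only [Matrix.cons_val_one, Matrix.cons_val_zero]; linarith
    · refine ⟨![M \ S, S], fin _ _ sdiff_subset hS sdiff_disjoint (sdiff_union_of_subset hS), ?_⟩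
      rw [Fin.forall_fin_two]
      refine ⟨h2, ?_⟩
      simp only [Matrix.cons_val_one, Matrix.cons_val_zero]; linarith

/-- For `n` agents with additive valuations and equal entitlements `1/n`, there is an
allocation giving every agent at least the minimum of 3/4 of her AnyPrice share and
2n/(3n-1) of her truncated proportional share; in particular, at least a 2n/(3n-1)
fraction of her AnyPrice share. -/
theorem aps_equal_entitlements_allocation {ι : Type*} [DecidableEq ι] (n : ℕ) (hn : 0 < n)
    (M : Finset ι) (w : Fin n → ι → ℝ)
    (hw : ∀ i, ∀ j ∈ M, 0 ≤ w i j) :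
    ∃ A : Fin n → Finset ι, IsPartition M A ∧
      ∀ i, (min ((3 / 4) * APS (1 / (n : ℝ)) (fun S => ∑ j ∈ S, w i j) M)
            ((2 * (n : ℝ) / (3 * (n : ℝ) - 1)) * TPS (1 / (n : ℝ)) (w i) M)
          ≤ ∑ j ∈ A i, w i j) ∧
        (2 * (n : ℝ) / (3 * (n : ℝ) - 1)) * APS (1 / (n : ℝ)) (fun S => ∑ j ∈ S, w i j) M
          ≤ ∑ j ∈ A i, w i j := by
  rcases le_or_gt n 2 with h2 | h3
  · obtain ⟨A, hA, h⟩ := main_small n hn h2 M w hw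
    refine ⟨A, hA, fun i => ?_⟩
    have h0 := aps_nonneg (1 / (n : ℝ)) (w i) M (hw i)
    have hn1 : (1 : ℝ) ≤ n := by exact_mod_cast hn
    refine ⟨(min_le_left _ _).trans (le_trans ?_ (h i)), le_trans ?_ (h i)⟩
    · linarith
    · apply mul_le_of_le_one_left h0
      rw [div_le_one (by linarith)]; linarith
  · obtain ⟨A, hA, h⟩ := main_three n h3 M w hw
    exact ⟨A, hA, fun i => max_le_iff.1 (h i)⟩
end

section
/- The two definitions of the AnyPrice share coincide: for every monotone, normalized, nonnegative valuation v over a finite set M of indivisible goods and every entitlement b with 0 < b ≤ 1, the minimum over all price vectors p : M → ℝ_{≥0} with Σ_{j∈M} p_j = 1 of max{ v(S) : S ⊆ M, Σ_{j∈S} p_j ≤ b } equals the maximum value z ≥ 0 for which there exist weights λ_T ≥ 0 for all T ⊆ M with Σ_T λ_T = 1, λ_T = 0 for every T with v(T) < z, and Σ_{T : j∈T} λ_T ≤ b for every item j ∈ M. -/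
open Finset

/-- The weight-based (dual) definition of the AnyPrice share: the maximum `z ≥ 0`
admitting weights on subsets of `M` summing to 1, supported only on sets of value at
least `z`, covering every item with total weight at most `b`. -/
noncomputable def APSweights {ι : Type*} [DecidableEq ι] (b : ℝ) (v : Finset ι → ℝ) (M : Finset ι) : ℝ :=
  sSup {z : ℝ | 0 ≤ z ∧ ∃ lam : Finset ι → ℝ, (∀ T, 0 ≤ lam T) ∧
    (∑ T ∈ M.powerset, lam T) = 1 ∧
    (∀ T ∈ M.powerset, v T < z → lam T = 0) ∧
    ∀ j ∈ M, (∑ T ∈ M.powerset.filter (fun T => j ∈ T), lam T) ≤ b}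

lemma aps_sep {ι : Type*} [DecidableEq ι] (M : Finset ι) (hM : M.Nonempty)
    (b : ℝ) (F : Finset (Finset ι)) (hF : ∀ T ∈ F, T ⊆ M)
    (key : ∀ p : ι → ℝ, (∀ j ∈ M, 0 ≤ p j) → (∑ j ∈ M, p j) = 1 →
      ∃ S ∈ F, (∑ j ∈ S, p j) ≤ b) :
    ∃ lam : Finset ι → ℝ, (∀ T, 0 ≤ lam T) ∧ (∑ T ∈ F, lam T) = 1 ∧
      (∀ T, T ∉ F → lam T = 0) ∧
      ∀ j ∈ M, (∑ T ∈ F, if j ∈ T then lam T else 0) ≤ b := by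
  classical
  let ind : Finset ι → (ι → ℝ) := fun T => ∑ j ∈ T, Pi.single j (1:ℝ)
  have hind : ∀ T j, ind T j = if j ∈ T then 1 else 0 := by
    intro T j
    simp [ind, Finset.sum_apply, Pi.single_apply]
  let L : ({T // T ∈ F} → ℝ) →ₗ[ℝ] (ι → ℝ) :=
    ∑ T : {T // T ∈ F}, (LinearMap.proj T).smulRight (ind T.1)
  have hL : ∀ μ, L μ = ∑ T : {T // T ∈ F}, μ T • ind T.1 := by
    intro μ; simp [L, LinearMap.sum_apply]
  have hLc : Continuous L := by
    have : (L : ({T // T ∈ F} → ℝ) → (ι → ℝ)) = fun μ => ∑ T : {T // T ∈ F}, μ T • ind T.1 :=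
      funext hL
    rw [this]; fun_prop
  let C : Set (ι → ℝ) := L '' stdSimplex ℝ {T // T ∈ F}
  let D : Set (ι → ℝ) := {x | ∀ j ∈ M, x j ≤ b}
  have hCc : IsCompact C := (isCompact_stdSimplex ℝ _).image hLc
  have hCv : Convex ℝ C := (convex_stdSimplex ℝ _).linear_image L
  have hDv : Convex ℝ D := by
    intro x hx y hy s t hs ht hst j hj
    have h1 := mul_le_mul_of_nonneg_left (hx j hj) hs
    have h2 := mul_le_mul_of_nonneg_left (hy j hj) ht
    have h3 : s * b + t * b = b := by rw [← add_mul, hst, one_mul]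
    simp only [Pi.add_apply, Pi.smul_apply, smul_eq_mul]
    linarith
  have hDc : IsClosed D := by
    have : D = ⋂ j ∈ M, {x : ι → ℝ | x j ≤ b} := by ext; simp [D]
    rw [this]
    exact isClosed_biInter fun j _ => isClosed_le (continuous_apply j) continuous_const
  by_cases hdis : Disjoint C D
  · exfalso
    obtain ⟨f, u, w, hfu, huw, hfw⟩ := geometric_hahn_banach_compact_closed hCv hCc hDv hDc hdis
    let q : ι → ℝ := fun j => - f (Pi.single j 1)
    have hfind : ∀ T, f (ind T) = - ∑ j ∈ T, q j := by
      intro T; simp [ind, q]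
    have hbM : w < - (b * ∑ j ∈ M, q j) := by
      have := hfw (b • ind M) (by
        intro j hj
        simp [hind, hj])
      rw [map_smul, hfind, smul_eq_mul] at this
      linarith
    have hq : ∀ j ∈ M, 0 ≤ q j := by
      intro j hj
      by_contra hneg
      push Not at hneg
      set t := (- (b * ∑ j ∈ M, q j) - w) / (- q j) with ht
      have htn : 0 ≤ t := div_nonneg (by linarith) (by linarith)
      have := hfw (b • ind M - t • Pi.single j 1) (by
        intro i hi
        have : 0 ≤ t * (Pi.single j (1:ℝ) : ι → ℝ) i := by
          apply mul_nonneg htn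
          rw [Pi.single_apply]; split_ifs <;> norm_num
        simp only [Pi.sub_apply, Pi.smul_apply, smul_eq_mul, hind, hi, if_true]
        linarith)
      have hfj : f (Pi.single j 1) = - q j := by simp [q]
      rw [map_sub, map_smul, map_smul, hfind, smul_eq_mul, smul_eq_mul, hfj, ht,
        div_mul_cancel₀ _ (by linarith : - q j ≠ 0)] at this
      linarith
    have hFq : ∀ T ∈ F, b * ∑ j ∈ M, q j < ∑ j ∈ T, q j := by
      intro T hT
      have := hfu (ind T) ⟨Pi.single ⟨T, hT⟩ 1, single_mem_stdSimplex ℝ _, by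
        rw [hL, Finset.sum_eq_single ⟨T, hT⟩]
        · simp
        · intro S _ hS
          simp [Pi.single_apply, hS]
        · simp⟩
      rw [hfind] at this
      linarith
    have hs0 : 0 ≤ ∑ j ∈ M, q j := Finset.sum_nonneg hq
    rcases hs0.eq_or_lt with h0 | hpos
    · obtain ⟨j0, hj0⟩ := hM
      obtain ⟨S, hS, -⟩ := key (Pi.single j0 1)
        (fun j _ => by rw [Pi.single_apply]; split_ifs <;> norm_num)
        (by simp [Pi.single_apply, hj0])
      have h1 := hFq S hS
      have h2 : ∑ j ∈ S, q j ≤ ∑ j ∈ M, q j :=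
        Finset.sum_le_sum_of_subset_of_nonneg (hF S hS) (fun i hi _ => hq i hi)
      rw [← h0] at h1 h2
      linarith
    · obtain ⟨S, hS, hSb⟩ := key (fun j => q j / ∑ j ∈ M, q j)
        (fun j hj => div_nonneg (hq j hj) hs0)
        (by rw [← Finset.sum_div, div_self hpos.ne'])
      rw [← Finset.sum_div, div_le_iff₀ hpos] at hSb
      linarith [hFq S hS]
  · rw [Set.not_disjoint_iff] at hdis
    obtain ⟨x, ⟨μ, hμ, rfl⟩, hxD⟩ := hdis
    refine ⟨fun T => if h : T ∈ F then μ ⟨T, h⟩ else 0, ?_, ?_, ?_, ?_⟩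
    · intro T
      dsimp only
      split_ifs with h
      · exact hμ.1 _
      · exact le_rfl
    · rw [← hμ.2, ← Finset.sum_coe_sort F]
      exact Finset.sum_congr rfl fun T _ => by simp
    · intro T hT; simp [hT]
    · intro j hj
      have := hxD j hj
      rw [hL, Finset.sum_apply] at this
      refine le_trans (le_of_eq ?_) this
      rw [← Finset.sum_coe_sort F]
      exact Finset.sum_congr rfl fun T _ => by simp [hind]

/-- The price-based and weight-based definitions of the AnyPrice share coincide for
every monotone, normalized, nonnegative valuation and entitlement `0 < b ≤ 1`. -/
theorem aps_price_eq_weights {ι : Type*} [DecidableEq ι] (M : Finset ι)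
    (v : Finset ι → ℝ) (b : ℝ) (hb0 : 0 < b) (hb1 : b ≤ 1)
    (hnorm : v ∅ = 0)
    (hmono : ∀ S T : Finset ι, S ⊆ T → T ⊆ M → v S ≤ v T)
    (hnonneg : ∀ S : Finset ι, S ⊆ M → 0 ≤ v S) :
    APS b v M = APSweights b v M := by
  rcases M.eq_empty_or_nonempty with rfl | hM
  · have h1 : APS b v ∅ = 0 := by simp [APS]
    have h2 : APSweights b v ∅ = 0 := by
      unfold APSweights
      refine Eq.trans (congrArg sSup ?_) (csSup_singleton (0:ℝ))
      ext z
      simp only [Set.mem_setOf_eq, Set.mem_singleton_iff]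
      constructor
      · rintro ⟨hz, lam, -, h1, h2, -⟩
        by_contra hne
        have : lam ∅ = 0 := h2 ∅ (by simp) (by rw [hnorm]; exact lt_of_le_of_ne hz (Ne.symm hne))
        simp [this] at h1
      · rintro rfl
        exact ⟨le_rfl, fun _ => 1, by simp, by simp, by simp [hnorm], by simp⟩
    rw [h1, h2]
  let U : (ι → ℝ) → Set ℝ := fun p => {u : ℝ | ∃ S, S ⊆ M ∧ (∑ j ∈ S, p j) ≤ b ∧ u = v S}
  have hUfin : ∀ p, (U p).Finite := fun p => by
    apply (M.powerset.image v).finite_toSet.subset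
    rintro u ⟨S, hS, -, rfl⟩
    simp only [Finset.coe_image, Set.mem_image, Finset.mem_coe, Finset.mem_powerset]
    exact ⟨S, hS, rfl⟩
  have hUne : ∀ p, (U p).Nonempty := fun p =>
    ⟨v ∅, ∅, Finset.empty_subset _, by simpa using hb0.le, rfl⟩
  have hU0 : ∀ p, 0 ≤ sSup (U p) := fun p =>
    le_csSup (hUfin p).bddAbove ⟨∅, Finset.empty_subset _, by simpa using hb0.le, hnorm.symm⟩
  set P : Set ℝ := {t : ℝ | ∃ p : ι → ℝ, (∀ j ∈ M, 0 ≤ p j) ∧ (∑ j ∈ M, p j) = 1 ∧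
    t = sSup {u : ℝ | ∃ S, S ⊆ M ∧ (∑ j ∈ S, p j) ≤ b ∧ u = v S}} with hP
  have hPne : P.Nonempty := by
    obtain ⟨j0, hj0⟩ := hM
    exact ⟨_, Pi.single j0 1,
        (fun j _ => by rw [Pi.single_apply]; split_ifs <;> norm_num),
        (by simp [Pi.single_apply, hj0]), rfl⟩
  have hPlb : ∀ t ∈ P, 0 ≤ t := by
    rintro t ⟨p, -, -, rfl⟩
    exact hU0 p
  have hPbb : BddBelow P := ⟨0, hPlb⟩
  have hAPS : APS b v M = sInf P := rfl
  rw [hAPS]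
  symm
  unfold APSweights
  refine IsGreatest.csSup_eq ⟨⟨le_csInf hPne hPlb, ?_⟩, ?_⟩
  · obtain ⟨lam, h0, h1, h2, h3⟩ := aps_sep M hM b (M.powerset.filter fun T => sInf P ≤ v T)
      (fun T hT => Finset.mem_powerset.1 (Finset.mem_filter.1 hT).1)
      (fun p hp hp1 => by
        obtain ⟨S, hS, hSb, hSv⟩ := (hUne p).csSup_mem (hUfin p)
        refine ⟨S, Finset.mem_filter.2 ⟨Finset.mem_powerset.2 hS, ?_⟩, hSb⟩
        rw [← hSv]
        exact csInf_le hPbb ⟨p, hp, hp1, rfl⟩)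
    refine ⟨lam, h0, ?_, ?_, ?_⟩
    · rw [← h1]
      symm
      exact Finset.sum_subset (Finset.filter_subset _ _) fun T _ hT => h2 T hT
    · intro T _ hlt
      exact h2 T fun h => absurd (Finset.mem_filter.1 h).2 (not_le.2 hlt)
    · intro j hj
      refine le_trans (le_of_eq ?_) (h3 j hj)
      rw [Finset.sum_filter]
      symm
      exact Finset.sum_subset (Finset.filter_subset _ _) fun T _ hT => by simp [h2 T hT]
  · rintro z ⟨hz, lam, h0, h1, h2, h3⟩
    apply le_csInf hPne
    rintro t ⟨p, hp, hp1, rfl⟩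
    have hsum : ∑ T ∈ M.powerset, lam T * (∑ j ∈ T, p j) ≤ b := by
      calc ∑ T ∈ M.powerset, lam T * (∑ j ∈ T, p j)
          = ∑ T ∈ M.powerset, ∑ j ∈ M, if j ∈ T then lam T * p j else 0 := by
            refine Finset.sum_congr rfl fun T hT => ?_
            rw [Finset.mul_sum, ← Finset.sum_filter, Finset.filter_mem_eq_inter,
              Finset.inter_eq_right.2 (Finset.mem_powerset.1 hT)]
        _ = ∑ j ∈ M, (∑ T ∈ M.powerset.filter (fun T => j ∈ T), lam T) * p j := by
            rw [Finset.sum_comm]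
            refine Finset.sum_congr rfl fun j _ => ?_
            rw [Finset.sum_mul, Finset.sum_filter]
        _ ≤ ∑ j ∈ M, b * p j := Finset.sum_le_sum fun j hj =>
            mul_le_mul_of_nonneg_right (h3 j hj) (hp j hj)
        _ = b := by rw [← Finset.mul_sum, hp1, mul_one]
    have hex : ∃ T ∈ M.powerset, lam T ≠ 0 ∧ (∑ j ∈ T, p j) ≤ b := by
      by_contra hno
      push Not at hno
      have hlt : ∑ T ∈ M.powerset, lam T * b < ∑ T ∈ M.powerset, lam T * (∑ j ∈ T, p j) := by
        obtain ⟨T, hT, hT0⟩ := Finset.exists_ne_zero_of_sum_ne_zero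
          (by rw [h1]; exact one_ne_zero : ∑ T ∈ M.powerset, lam T ≠ 0)
        refine Finset.sum_lt_sum (fun S hS => ?_) ⟨T, hT, ?_⟩
        · by_cases hS0 : lam S = 0
          · simp [hS0]
          · exact mul_le_mul_of_nonneg_left (hno S hS hS0).le (h0 S)
        · exact mul_lt_mul_of_pos_left (hno T hT hT0) (lt_of_le_of_ne (h0 T) (Ne.symm hT0))
      rw [← Finset.sum_mul, h1, one_mul] at hlt
      linarith
    obtain ⟨T, hT, hT0, hTb⟩ := hex
    have hzT : z ≤ v T := by
      by_contra h
      exact hT0 (h2 T hT (not_le.1 h))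
    exact hzT.trans (le_csSup (hUfin p).bddAbove ⟨T, Finset.mem_powerset.1 hT, hTb, rfl⟩)
end

section
/- If the pair (A, p) is a competitive equilibrium for n agents with monotone, normalized, nonnegative valuations v_1,…,v_n over a finite set M of indivisible goods, where each agent's budget equals her entitlement b_i > 0 and Σ_i b_i = 1, then every agent receives at least her AnyPrice share: v_i(A_i) ≥ APS(b_i, v_i, M) for every agent i. -/
open Finset

/-- Competitive equilibrium: an allocation together with item prices such that every
agent's bundle is within her budget and is value-maximizing among affordable bundles. -/
def IsCE {ι : Type*} [DecidableEq ι] {n : ℕ} (v : Fin n → Finset ι → ℝ) (b : Fin n → ℝ)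
    (M : Finset ι) (A : Fin n → Finset ι) (p : ι → ℝ) : Prop :=
  IsPartition M A ∧ (∀ j ∈ M, 0 ≤ p j) ∧
  (∀ i, ∑ j ∈ A i, p j ≤ b i) ∧
  ∀ i, ∀ S ⊆ M, (∑ j ∈ S, p j) ≤ b i → v i S ≤ v i (A i)

/-- In every competitive equilibrium with entitlements as budgets, every agent receives
at least her AnyPrice share. -/
theorem ce_gives_aps {ι : Type*} [DecidableEq ι] {n : ℕ} (M : Finset ι)
    (v : Fin n → Finset ι → ℝ) (b : Fin n → ℝ)
    (hnorm : ∀ i, v i ∅ = 0)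
    (hmono : ∀ i, ∀ S T : Finset ι, S ⊆ T → T ⊆ M → v i S ≤ v i T)
    (hnonneg : ∀ i, ∀ S : Finset ι, S ⊆ M → 0 ≤ v i S)
    (hb : ∀ i, 0 < b i) (hbsum : ∑ i, b i = 1)
    (A : Fin n → Finset ι) (p : ι → ℝ) (hCE : IsCE v b M A p) :
    ∀ i, APS (b i) (v i) M ≤ v i (A i) := by
  obtain ⟨⟨hA, hdis, hcov⟩, hp, hbud, hopt⟩ := hCE
  intro i
  have hM : M = Finset.univ.biUnion A := by
    ext x
    simp only [Finset.mem_biUnion, Finset.mem_univ, true_and]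
    exact ⟨hcov x, fun ⟨k, hk⟩ => hA k hk⟩
  have hP : ∑ j ∈ M, p j ≤ 1 := by
    rw [hM, Finset.sum_biUnion (fun k _ l _ hkl => hdis k l hkl), ← hbsum]
    exact Finset.sum_le_sum fun k _ => hbud k
  unfold APS
  rcases M.eq_empty_or_nonempty with h0 | ⟨j0, hj0⟩
  · have : {t : ℝ | ∃ p : ι → ℝ, (∀ j ∈ M, 0 ≤ p j) ∧ (∑ j ∈ M, p j) = 1 ∧
        t = sSup {u : ℝ | ∃ S, S ⊆ M ∧ (∑ j ∈ S, p j) ≤ b i ∧ u = v i S}} = ∅ := by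
      ext t
      simp [h0]
    rw [this, Real.sInf_empty]
    exact hnonneg i _ (hA i)
  · set q : ι → ℝ := fun j => p j + if j = j0 then 1 - ∑ j ∈ M, p j else 0 with hq
    have hpq : ∀ j, p j ≤ q j := by
      intro j
      simp only [hq]
      split_ifs <;> linarith
    have hle : sSup {u : ℝ | ∃ S, S ⊆ M ∧ (∑ j ∈ S, q j) ≤ b i ∧ u = v i S} ≤ v i (A i) := by
      apply csSup_le
      · exact ⟨v i ∅, ∅, Finset.empty_subset _, by simpa using (hb i).le, rfl⟩
      · rintro u ⟨S, hS, hSb, rfl⟩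
        exact hopt i S hS ((Finset.sum_le_sum fun j _ => hpq j).trans hSb)
    refine le_trans (csInf_le ?_ ?_) hle
    · refine ⟨0, ?_⟩
      rintro t ⟨r, -, -, rfl⟩
      apply Real.sSup_nonneg
      rintro u ⟨S, hS, -, rfl⟩
      exact hnonneg i S hS
    · refine ⟨q, fun j hj => (hp j hj).trans (hpq j), ?_, rfl⟩
      simp only [hq, Finset.sum_add_distrib, Finset.sum_ite_eq', hj0, if_true]
      ring
end

section
/- For every monotone, normalized, nonnegative valuation v over a finite set M of indivisible goods and every entitlement b with 0 < b ≤ 1, the AnyPrice share is at least the pessimistic share: APS(b, v, M) ≥ Pessimistic(b, v, M). -/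
open Finset

/-- The pessimistic share: the maximum ℓ-out-of-d share over all positive integers
`l, d` with `l / d ≤ b`. -/
noncomputable def Pessimistic {ι : Type*} [DecidableEq ι] (b : ℝ) (v : Finset ι → ℝ) (M : Finset ι) : ℝ :=
  sSup {t : ℝ | ∃ l d : ℕ, 0 < l ∧ 0 < d ∧ (l : ℝ) / d ≤ b ∧
    ∃ P : Fin d → Finset ι, IsPartition M P ∧
      ∀ J : Finset (Fin d), J.card = l → t ≤ v (J.biUnion P)}

theorem exists_cheap {α : Type*} [DecidableEq α] (q : α → ℝ) (k : ℕ) :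
    ∀ (s : Finset α) (l : ℕ), 0 < l → s.card = l + k →
    ∃ J : Finset α, J ⊆ s ∧ J.card = l ∧ (s.card : ℝ) * ∑ i ∈ J, q i ≤ l * ∑ i ∈ s, q i := by
  induction k with
  | zero =>
    intro s l hl hs
    exact ⟨s, (Finset.Subset.refl _), by simpa using hs, by simp [hs]⟩
  | succ k ih =>
    intro s l hl hs
    obtain ⟨J, hJs, hJc, hJ⟩ := ih s (l + 1) (by omega) (by omega)
    have hne : J.Nonempty := by
      rw [← Finset.card_pos]; omega
    obtain ⟨x, hx, hmax⟩ := Finset.exists_max_image J q hne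
    have h1 : ∑ i ∈ J, q i ≤ J.card • q x := Finset.sum_le_card_nsmul J q _ hmax
    have h2 := Finset.add_sum_erase J q hx
    refine ⟨J.erase x, (Finset.erase_subset _ _).trans hJs, by
      rw [Finset.card_erase_of_mem hx]; omega, ?_⟩
    rw [hJc, nsmul_eq_mul] at h1
    push_cast at h1 hJ
    have hc : (0 : ℝ) ≤ s.card := Nat.cast_nonneg _
    have hl' : (0 : ℝ) ≤ l := Nat.cast_nonneg _
    have h3 : ((l : ℝ) + 1) * ∑ i ∈ J.erase x, q i ≤ l * ∑ i ∈ J, q i := by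
      have : ∑ i ∈ J.erase x, q i = ∑ i ∈ J, q i - q x := by linarith
      rw [this]; linarith
    have h4 := mul_le_mul_of_nonneg_left h3 hc
    have h5 := mul_le_mul_of_nonneg_left hJ hl'
    have h6 : ((l : ℝ) + 1) * (s.card * ∑ i ∈ J.erase x, q i) ≤
        (l + 1) * (l * ∑ i ∈ s, q i) := by linarith
    exact le_of_mul_le_mul_left h6 (by linarith)

/-- For every monotone, normalized, nonnegative valuation and entitlement `0 < b ≤ 1`,
the AnyPrice share is at least the pessimistic share. -/
theorem aps_ge_pessimistic {ι : Type*} [DecidableEq ι] (M : Finset ι)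
    (v : Finset ι → ℝ) (b : ℝ) (hb0 : 0 < b) (hb1 : b ≤ 1)
    (hnorm : v ∅ = 0)
    (hmono : ∀ S T : Finset ι, S ⊆ T → T ⊆ M → v S ≤ v T)
    (hnonneg : ∀ S : Finset ι, S ⊆ M → 0 ≤ v S) :
    Pessimistic b v M ≤ APS b v M := by
  classical
  have hbdd : ∀ p : ι → ℝ,
      BddAbove {u : ℝ | ∃ S, S ⊆ M ∧ (∑ j ∈ S, p j) ≤ b ∧ u = v S} := by
    intro p
    refine ⟨v M, ?_⟩
    rintro u ⟨S, hS, -, rfl⟩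
    exact hmono S M hS (Finset.Subset.refl _)
  have hld : ∀ l d : ℕ, 0 < d → (l : ℝ) / d ≤ b → l ≤ d := by
    intro l d hd h
    have hd' : (0 : ℝ) < d := by exact_mod_cast hd
    have := (div_le_one hd').1 (h.trans hb1)
    exact_mod_cast this
  have hnn : 0 ≤ APS b v M := by
    apply Real.sInf_nonneg
    rintro t ⟨p, -, -, rfl⟩
    exact le_csSup (hbdd p) ⟨∅, by simp, by simpa using hb0.le, hnorm.symm⟩
  apply Real.sSup_le _ hnn
  rintro t ⟨l, d, hl, hd, hb, P, ⟨hP1, hP2, hP3⟩, ht⟩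
  have hle := hld l d hd hb
  have hd' : (0 : ℝ) < d := by exact_mod_cast hd
  rcases M.eq_empty_or_nonempty with hM | ⟨m, hm⟩
  · obtain ⟨J, -, hJ⟩ := Finset.exists_subset_card_eq
      (s := (Finset.univ : Finset (Fin d))) (n := l) (by simpa using hle)
    have h0 : J.biUnion P = ∅ := by
      rw [← Finset.subset_empty, ← hM]
      exact Finset.biUnion_subset.2 fun i _ => hP1 i
    have := ht J hJ
    rw [h0, hnorm] at this
    exact this.trans hnn
  · apply le_csInf
    · refine ⟨_, Pi.single m 1, ?_, ?_, rfl⟩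
      · intro j _
        by_cases h : j = m
        · subst h; simp
        · simp [h]
      · simp [Finset.sum_pi_single, hm]
    · rintro _ ⟨p, hp, hsum, rfl⟩
      have hbU : (Finset.univ : Finset (Fin d)).biUnion P = M := by
        ext x
        simp only [Finset.mem_biUnion, Finset.mem_univ, true_and]
        exact ⟨fun ⟨i, hi⟩ => hP1 i hi, hP3 x⟩
      have hsumJ : ∀ J : Finset (Fin d),
          ∑ j ∈ J.biUnion P, p j = ∑ i ∈ J, ∑ j ∈ P i, p j := fun J =>
        Finset.sum_biUnion fun i _ j _ hij => hP2 i j hij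
      obtain ⟨J, -, hJc, hJ⟩ := exists_cheap (fun i => ∑ j ∈ P i, p j) (d - l)
        (Finset.univ : Finset (Fin d)) l hl (by simp; omega)
      rw [← hsumJ, ← hsumJ, hbU, hsum, Finset.card_univ, Fintype.card_fin, mul_one] at hJ
      refine (ht J hJc).trans (le_csSup (hbdd p) ⟨J.biUnion P, ?_, ?_, rfl⟩)
      · exact Finset.biUnion_subset.2 fun i _ => hP1 i
      · refine le_trans ?_ hb
        rw [le_div_iff₀ hd']
        linarith
end

section
/- For every additive valuation v over a finite set M of indivisible goods and every entitlement b with 0 < b ≤ 1, it holds that 2·Pessimistic(b, v, M) ≥ APS(b, v, M). In particular, letting k be the smallest integer with b ≥ 1/k, if z = APS(b, v, M) then M can be partitioned into k disjoint bundles each of value at least z/2. -/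
open Finset

def Pack {ι : Type*} [DecidableEq ι] (w : ι → ℝ) (h : ℝ) : ℕ → Finset ι → Prop
  | 0, _ => True
  | k + 1, R => ∃ B, B ⊆ R ∧ h ≤ ∑ j ∈ B, w j ∧ Pack w h k (R \ B)

theorem Pack.mono {ι : Type*} [DecidableEq ι] {w : ι → ℝ} {h : ℝ} {k : ℕ} :
    ∀ {R R' : Finset ι}, Pack w h k R → R ⊆ R' → Pack w h k R' := by
  induction k with
  | zero => intros; trivial
  | succ k ih =>
    rintro R R' ⟨B, hB, hv, hP⟩ hs
    exact ⟨B, hB.trans hs, hv, ih hP (Finset.sdiff_subset_sdiff hs (le_refl B))⟩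

theorem Pack.large {ι : Type*} [DecidableEq ι] {w : ι → ℝ} {h : ℝ} {k : ℕ} {R : Finset ι}
    (hP : Pack w h k R) (L : Finset ι) (hd : Disjoint R L) (hL : ∀ j ∈ L, h ≤ w j) :
    Pack w h (k + L.card) (R ∪ L) := by
  induction L using Finset.induction_on with
  | empty => simpa using hP
  | insert a s ha ih =>
    have h1 := ih (hd.mono_right (Finset.subset_insert _ _))
      (fun j hj => hL j (Finset.mem_insert_of_mem hj))
    rw [Finset.card_insert_of_notMem ha, ← add_assoc]
    refine ⟨{a}, by simp, by simpa using hL a (by simp), h1.mono ?_⟩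
    intro x hx
    have haR : a ∉ R := fun h' => (Finset.disjoint_left.mp hd h') (by simp)
    simp only [Finset.mem_union, Finset.mem_sdiff, Finset.mem_insert, Finset.mem_singleton] at *
    refine ⟨by tauto, ?_⟩
    rintro rfl
    tauto

theorem Pack.partition {ι : Type*} [DecidableEq ι] {w : ι → ℝ} {h : ℝ} {k : ℕ} :
    ∀ {R : Finset ι}, (∀ j ∈ R, 0 ≤ w j) → Pack w h (k + 1) R →
    ∃ P : Fin (k + 1) → Finset ι, IsPartition R P ∧ ∀ i, h ≤ ∑ j ∈ P i, w j := by
  induction k with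
  | zero =>
    rintro R hw ⟨B, hB, hv, -⟩
    refine ⟨fun _ => R, ⟨fun _ => le_refl _, fun i j hij => absurd (Fin.ext (by omega)) hij,
      fun x hx => ⟨0, hx⟩⟩, fun _ => hv.trans ?_⟩
    exact Finset.sum_le_sum_of_subset_of_nonneg hB (fun i hi _ => hw i hi)
  | succ k ih =>
    rintro R hw ⟨B, hB, hv, hP⟩
    obtain ⟨P, ⟨h1, h2, h3⟩, h4⟩ := ih (fun j hj => hw j (Finset.sdiff_subset hj)) hP
    have hdis : ∀ i, Disjoint B (P i) := fun i =>
      Finset.disjoint_sdiff.mono_right (h1 i)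
    refine ⟨Fin.cons B P, ⟨?_, ?_, ?_⟩, ?_⟩
    · intro i
      refine Fin.cases ?_ (fun i => ?_) i
      · simpa using hB
      · simpa using (h1 i).trans Finset.sdiff_subset
    · intro i j
      refine Fin.cases ?_ (fun i => ?_) i <;> refine Fin.cases ?_ (fun j => ?_) j
      · intro h; exact absurd rfl h
      · intro _; simpa using hdis j
      · intro _; simpa using (hdis i).symm
      · intro hij
        simpa using h2 i j (fun h => hij (by rw [h]))
    · intro x hx
      by_cases hxB : x ∈ B
      · exact ⟨0, by simpa using hxB⟩
      · obtain ⟨i, hi⟩ := h3 x (by simp [hx, hxB])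
        exact ⟨i.succ, by simpa using hi⟩
    · intro i
      refine Fin.cases ?_ (fun i => ?_) i
      · simpa using hv
      · simpa using h4 i

theorem fill_aux {ι : Type*} [DecidableEq ι] (w : ι → ℝ) (h a l : ℝ) (ha : a < h)
    (R : Finset ι) (hl : ∀ j ∈ R, w j ≤ l) (hv : h ≤ a + ∑ j ∈ R, w j) :
    ∃ A, A ⊆ R ∧ h ≤ a + ∑ j ∈ A, w j ∧ a + ∑ j ∈ A, w j ≤ h + l := by
  induction R using Finset.induction_on with
  | empty => simp at hv; linarith
  | insert x s hx ih =>
    by_cases hc : h ≤ a + ∑ j ∈ s, w j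
    · obtain ⟨A, h1, h2, h3⟩ := ih (fun j hj => hl j (Finset.mem_insert_of_mem hj)) hc
      exact ⟨A, h1.trans (Finset.subset_insert _ _), h2, h3⟩
    · refine ⟨insert x s, le_refl _, hv, ?_⟩
      rw [Finset.sum_insert hx]
      have := hl x (by simp)
      linarith

theorem sum_sdiff_eq {ι : Type*} [DecidableEq ι] (w : ι → ℝ) {A R : Finset ι} (h : A ⊆ R) :
    ∑ j ∈ R \ A, w j = ∑ j ∈ R, w j - ∑ j ∈ A, w j := by
  have := Finset.sum_sdiff (f := w) h
  linarith

theorem fin_aux {ι : Type*} [DecidableEq ι] (w : ι → ℝ) (h : ℝ) (x1 x2 : ι)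
    (hne : x1 ≠ x2) (h1 : w x1 < h) (h2 : w x2 < h) (R : Finset ι)
    (hx1 : x1 ∉ R) (hx2 : x2 ∉ R) (hw : ∀ j ∈ R, 0 ≤ w j)
    (hv : 2 * h ≤ w x1 + w x2 + ∑ j ∈ R, w j)
    (hl : ∀ l ∈ R, 2 * h ≤ w x1 + w x2 + ∑ j ∈ R, w j - w l) :
    Pack w h 2 ({x1, x2} ∪ R) := by
  have hR : R.Nonempty := by
    rw [Finset.nonempty_iff_ne_empty]
    rintro rfl
    simp at hv
    linarith
  obtain ⟨l, hlR, hlm⟩ := Finset.exists_max_image R w hR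
  have h3 := hl l hlR
  have h4 := hw l hlR
  obtain ⟨A, hA, hA1, hA2⟩ := fill_aux w h (w x1) (w l) h1 R hlm (by linarith)
  have hx1A : x1 ∉ A := fun h' => hx1 (hA h')
  have e1 : ∑ j ∈ insert x1 A, w j = w x1 + ∑ j ∈ A, w j := Finset.sum_insert hx1A
  have e2 : ∑ j ∈ insert x2 (R \ A), w j = w x2 + ∑ j ∈ R \ A, w j :=
    Finset.sum_insert (fun h' => hx2 (Finset.sdiff_subset h'))
  have e3 := sum_sdiff_eq w hA
  refine ⟨insert x1 A, ?_, by linarith, insert x2 (R \ A), ?_, by linarith, trivial⟩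
  · intro y hy
    have := @hA y
    simp only [Finset.mem_union, Finset.mem_insert, Finset.mem_singleton] at *
    tauto
  · intro y hy
    have hx2A : x2 ∉ A := fun h' => hx2 (hA h')
    simp only [Finset.mem_union, Finset.mem_insert, Finset.mem_singleton, Finset.mem_sdiff] at *
    rcases hy with rfl | ⟨hy1, hy2⟩
    · exact ⟨by tauto, by rintro (h' | h'); exacts [hne h'.symm, hx2A h']⟩
    · refine ⟨by tauto, ?_⟩
      rintro (rfl | h'); exacts [hx1 hy1, hy2 h']

theorem pack_step {ι : Type*} [DecidableEq ι] {w : ι → ℝ} {h : ℝ} {k : ℕ} {D R B : Finset ι}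
    (hD : Disjoint D R) (hB : B ⊆ R) (hv : h ≤ ∑ j ∈ B, w j)
    (hP : Pack w h k (D ∪ (R \ B))) : Pack w h (k + 1) (D ∪ R) := by
  refine ⟨B, hB.trans Finset.subset_union_right, hv, hP.mono ?_⟩
  intro y hy
  have h1 := @hB y
  have h2 : y ∈ D → y ∉ R := fun h' => Finset.disjoint_left.mp hD h'
  simp only [Finset.mem_union, Finset.mem_sdiff] at *
  tauto

theorem weak_aux {ι : Type*} [DecidableEq ι] (w : ι → ℝ) (h : ℝ) (hh : 0 < h) (x1 x2 : ι)
    (hne : x1 ≠ x2) (h1 : w x1 < h) (h2 : w x2 < h) (m : ℕ) : ∀ (R : Finset ι)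
    (_ : x1 ∉ R) (_ : x2 ∉ R) (_ : ∀ j ∈ R, 0 ≤ w j) (_ : ∀ j ∈ R, w j ≤ h / 2)
    (_ : 2 * (m + 1) * h + h / 2 ≤ w x1 + w x2 + ∑ j ∈ R, w j),
    Pack w h (m + 2) ({x1, x2} ∪ R) := by
  induction m with
  | zero =>
    intro R hx1 hx2 hw hl hv
    simp at hv
    refine fin_aux w h x1 x2 hne h1 h2 R hx1 hx2 hw (by linarith) ?_
    intro l hlR
    have := hl l hlR
    linarith
  | succ m ih =>
    intro R hx1 hx2 hw hl hv
    push_cast at hv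
    have hm : 0 ≤ (m : ℝ) * h := by positivity
    obtain ⟨A, hA, hA1, hA2⟩ := fill_aux w h 0 (h / 2) hh R hl (by nlinarith)
    have e3 := sum_sdiff_eq w hA
    refine pack_step (B := A) ?_ hA (by linarith) (ih (R \ A) ?_ ?_ ?_ ?_ ?_)
    · simp [hx1, hx2]
    · simp [hx1]
    · simp [hx2]
    · intro j hj; exact hw j (Finset.sdiff_subset hj)
    · intro j hj; exact hl j (Finset.sdiff_subset hj)
    · rw [e3]; nlinarith

theorem main_aux {ι : Type*} [DecidableEq ι] (w : ι → ℝ) (h : ℝ) (hh : 0 < h) (x1 x2 : ι)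
    (hne : x1 ≠ x2) (h1 : w x1 < h) (h2 : w x2 < h) (m : ℕ) : ∀ (R : Finset ι)
    (_ : x1 ∉ R) (_ : x2 ∉ R) (_ : ∀ j ∈ R, 0 ≤ w j) (_ : ∀ j ∈ R, w j < h)
    (_ : 2 * (m + 1) * h < w x1 + w x2 + ∑ j ∈ R, w j)
    (_ : ∀ H, H ⊆ R → H.card ≤ 2 * m + 1 → 2 * h ≤ w x1 + w x2 + ∑ j ∈ R \ H, w j),
    Pack w h (m + 2) ({x1, x2} ∪ R) := by
  induction m with
  | zero =>
    intro R hx1 hx2 hw hl hv hH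
    simp at hv
    refine fin_aux w h x1 x2 hne h1 h2 R hx1 hx2 hw (by linarith) ?_
    intro l hlR
    have := hH {l} (by simpa using hlR) (by simp)
    rw [sum_sdiff_eq w (by simpa using hlR)] at this
    simp at this
    linarith
  | succ m ih =>
    intro R hx1 hx2 hw hl hv hH
    push_cast at hv
    have hm : 0 ≤ (m : ℝ) * h := by positivity
    have hvR : 2 * h < ∑ j ∈ R, w j := by nlinarith
    have hR : R.Nonempty := by
      rw [Finset.nonempty_iff_ne_empty]
      rintro rfl
      simp at hvR
      linarith
    obtain ⟨y1, hy1, hy1m⟩ := Finset.exists_max_image R w hR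
    have eR : w y1 + ∑ j ∈ R.erase y1, w j = ∑ j ∈ R, w j := Finset.add_sum_erase R w hy1
    have hy1h := hl y1 hy1
    have hR1 : (R.erase y1).Nonempty := by
      rw [Finset.nonempty_iff_ne_empty]
      intro h'
      rw [h'] at eR
      simp at eR
      linarith
    obtain ⟨y2, hy2, hy2m⟩ := Finset.exists_max_image (R.erase y1) w hR1
    have hy2R : y2 ∈ R := Finset.mem_of_mem_erase hy2
    have hy21 : y1 ≠ y2 := (Finset.ne_of_mem_erase hy2).symm
    have hy12 := hy1m y2 hy2R
    have hD : Disjoint ({x1, x2} : Finset ι) R := by simp [hx1, hx2]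
    by_cases hc : h ≤ w y1 + w y2
    · have hB : ({y1, y2} : Finset ι) ⊆ R := by
        intro y hy; simp at hy; rcases hy with rfl | rfl <;> assumption
      have eB : ∑ j ∈ ({y1, y2} : Finset ι), w j = w y1 + w y2 := Finset.sum_pair hy21
      have e3 := sum_sdiff_eq w hB
      refine pack_step (B := {y1, y2}) hD hB (by linarith) (ih (R \ {y1, y2}) ?_ ?_ ?_ ?_ ?_ ?_)
      · simp [hx1]
      · simp [hx2]
      · intro j hj; exact hw j (Finset.sdiff_subset hj)
      · intro j hj; exact hl j (Finset.sdiff_subset hj)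
      · rw [e3, eB]; nlinarith
      · intro H hHR hcard
        have := hH ({y1, y2} ∪ H) (Finset.union_subset hB (hHR.trans Finset.sdiff_subset)) (by
          have h3 := Finset.card_union_le ({y1, y2} : Finset ι) H
          have h4 : ({y1, y2} : Finset ι).card = 2 := Finset.card_pair hy21
          omega)
        have e : (R \ {y1, y2}) \ H = R \ ({y1, y2} ∪ H) := by
          ext y
          simp only [Finset.mem_sdiff, Finset.mem_union]
          tauto
        rw [e]
        exact this
    · push Not at hc
      have hle : ∀ j ∈ R.erase y1, w j ≤ h / 2 := fun j hj => by
        have := hy2m j hj; linarith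
      obtain ⟨A, hA, hA1, hA2⟩ := fill_aux w h (w y1) (h / 2) hy1h (R.erase y1) hle (by linarith)
      have hy1A : y1 ∉ A := fun h' => by simpa using hA h'
      have hB : insert y1 A ⊆ R := by
        intro y hy; simp at hy; rcases hy with rfl | hy
        · exact hy1
        · exact Finset.mem_of_mem_erase (hA hy)
      have eB : ∑ j ∈ insert y1 A, w j = w y1 + ∑ j ∈ A, w j := Finset.sum_insert hy1A
      have e3 := sum_sdiff_eq w hB
      refine pack_step hD hB (by linarith)
        (weak_aux w h hh x1 x2 hne h1 h2 m (R \ insert y1 A) ?_ ?_ ?_ ?_ ?_)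
      · simp [hx1]
      · simp [hx2]
      · intro j hj; exact hw j (Finset.sdiff_subset hj)
      · intro j hj
        simp only [Finset.mem_sdiff, Finset.mem_insert, not_or] at hj
        exact hle j (Finset.mem_erase.mpr ⟨hj.2.1, hj.1⟩)
      · rw [e3, eB]; nlinarith

theorem two_le_aux {ι : Type*} [DecidableEq ι] (w : ι → ℝ) (S : Finset ι) (x1 x2 : ι)
    (hw1 : 0 ≤ w x1) (hw2 : 0 ≤ w x2)
    (hm1 : ∀ j ∈ S, w j ≤ w x1) (hm2 : ∀ j ∈ S, j ≠ x1 → w j ≤ w x2) (hc : S.card ≤ 2) :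
    ∑ j ∈ S, w j ≤ w x1 + w x2 := by
  have : S.card = 0 ∨ S.card = 1 ∨ S.card = 2 := by omega
  rcases this with h | h | h
  · rw [Finset.card_eq_zero] at h; subst h; simp; linarith
  · obtain ⟨a, rfl⟩ := Finset.card_eq_one.mp h
    have := hm1 a (by simp)
    simp; linarith
  · obtain ⟨a, b, hab, rfl⟩ := Finset.card_eq_two.mp h
    rw [Finset.sum_pair hab]
    have ha := hm1 a (by simp)
    have hb := hm1 b (by simp)
    have ha2 := hm2 a (by simp)
    have hb2 := hm2 b (by simp)
    by_cases h1 : a = x1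
    · have := hb2 (fun h => hab (h1.trans h.symm)); linarith
    · have := ha2 h1; linarith

theorem aps_set_finite {ι : Type*} [DecidableEq ι] (M : Finset ι) (v : Finset ι → ℝ)
    (p : ι → ℝ) (b : ℝ) :
    {u : ℝ | ∃ S, S ⊆ M ∧ (∑ j ∈ S, p j) ≤ b ∧ u = v S}.Finite := by
  refine (M.powerset.image v).finite_toSet.subset ?_
  rintro u ⟨S, hS, -, rfl⟩
  simp only [Finset.coe_image, Set.mem_image, Finset.mem_coe, Finset.mem_powerset]
  exact ⟨S, hS, rfl⟩

theorem aps_price {ι : Type*} [DecidableEq ι] (M : Finset ι)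
    (w : ι → ℝ) (hw : ∀ j ∈ M, 0 ≤ w j) (b : ℝ) (hb0 : 0 < b) (q : ι → ℝ)
    (hq : ∀ j ∈ M, 0 ≤ q j) (hQ : 0 < ∑ j ∈ M, q j) :
    ∃ S, S ⊆ M ∧ ∑ j ∈ S, q j ≤ b * ∑ j ∈ M, q j ∧
      APS b (fun S => ∑ j ∈ S, w j) M ≤ ∑ j ∈ S, w j := by
  set Q := ∑ j ∈ M, q j with hQd
  let p : ι → ℝ := fun j => q j / Q
  have hfin := aps_set_finite M (fun S => ∑ j ∈ S, w j) p b
  have hne : {u : ℝ | ∃ S, S ⊆ M ∧ (∑ j ∈ S, p j) ≤ b ∧ u = ∑ j ∈ S, w j}.Nonempty :=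
    ⟨0, ∅, by simp, by simpa using hb0.le, by simp⟩
  obtain ⟨S, hS, hpS, hvS⟩ := hne.csSup_mem hfin
  refine ⟨S, hS, ?_, ?_⟩
  · simp only [p] at hpS
    rw [← Finset.sum_div, div_le_iff₀ hQ] at hpS
    exact hpS
  · rw [← hvS]
    refine csInf_le ⟨0, ?_⟩ ⟨p, ?_, ?_, rfl⟩
    · rintro t ⟨p', hp', -, rfl⟩
      exact le_csSup (aps_set_finite M _ p' b).bddAbove ⟨∅, by simp, by simpa using hb0.le, by simp⟩
    · intro j hj; exact div_nonneg (hq j hj) hQ.le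
    · simp only [p]
      rw [← Finset.sum_div, div_self hQ.ne']

theorem aps_le_total {ι : Type*} [DecidableEq ι] (M : Finset ι)
    (w : ι → ℝ) (hw : ∀ j ∈ M, 0 ≤ w j) (b : ℝ) (hb0 : 0 < b) :
    APS b (fun S => ∑ j ∈ S, w j) M ≤ ∑ j ∈ M, w j := by
  rcases M.eq_empty_or_nonempty with rfl | hM
  · simp [APS]
  · obtain ⟨S, hS, -, h⟩ := aps_price M w hw b hb0 (fun _ => 1) (by simp) (by
      simpa using hM)
    exact h.trans (Finset.sum_le_sum_of_subset_of_nonneg hS (fun i hi _ => hw i hi))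

theorem pack_main {ι : Type*} [DecidableEq ι] (M : Finset ι)
    (w : ι → ℝ) (hw : ∀ j ∈ M, 0 ≤ w j) (b : ℝ) (hb0 : 0 < b) (k : ℕ)
    (hk : b * k < 1) (h : ℝ) (hh : 0 < h)
    (hz : APS b (fun S => ∑ j ∈ S, w j) M = 2 * h) :
    Pack w h (k + 1) M := by
  -- pricing principle
  have price : ∀ q : ι → ℝ, (∀ j ∈ M, 0 ≤ q j) → 0 < ∑ j ∈ M, q j →
      ∃ S, S ⊆ M ∧ k * ∑ j ∈ S, q j < ∑ j ∈ M, q j ∧ 2 * h ≤ ∑ j ∈ S, w j := by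
    intro q hq hQ
    obtain ⟨S, hS, h1, h2⟩ := aps_price M w hw b hb0 q hq hQ
    refine ⟨S, hS, ?_, hz ▸ h2⟩
    have hk0 : (0 : ℝ) ≤ k := by positivity
    nlinarith
  have htot := aps_le_total M w hw b hb0
  rw [hz] at htot
  set L := M.filter (fun j => h ≤ w j) with hLd
  set T := M.filter (fun j => ¬ h ≤ w j) with hTd
  have hLT : ∀ f : ι → ℝ, ∑ j ∈ L, f j + ∑ j ∈ T, f j = ∑ j ∈ M, f j :=
    fun f => Finset.sum_filter_add_sum_filter_not M _ f
  have hTL : T ∪ L = M := by rw [Finset.union_comm]; exact Finset.filter_union_filter_not_eq _ M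
  have hdis : Disjoint T L := (Finset.disjoint_filter_filter_not M M _).symm
  have hTM : T ⊆ M := Finset.filter_subset _ _
  have hLM : L ⊆ M := Finset.filter_subset _ _
  have hLw : ∀ j ∈ L, h ≤ w j := fun j hj => (Finset.mem_filter.mp hj).2
  have hTw : ∀ j ∈ T, w j < h := fun j hj => not_le.mp (Finset.mem_filter.mp hj).2
  have hT0 : ∀ j ∈ T, 0 ≤ w j := fun j hj => hw j (hTM hj)
  -- a set avoiding L lies in T
  -- pricing with a price `g` on T and price `c` on each large item
  have price2 : ∀ (g : ι → ℝ) (c : ℝ), 0 < c → (∀ j ∈ T, 0 ≤ g j) →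
      c * L.card + ∑ j ∈ T, g j ≤ c * k → 0 < c * L.card + ∑ j ∈ T, g j →
      ∃ S, S ⊆ T ∧ ∑ j ∈ S, g j < c ∧ 2 * h ≤ ∑ j ∈ S, w j := by
    intro g c hc hg hle hpos
    let q : ι → ℝ := fun j => if h ≤ w j then c else g j
    have hqL : ∀ j ∈ L, q j = c := fun j hj => if_pos (hLw j hj)
    have hqT : ∀ j ∈ T, q j = g j := fun j hj => if_neg (not_le.mpr (hTw j hj))
    have hQ : ∑ j ∈ M, q j = c * L.card + ∑ j ∈ T, g j := by
      rw [← hLT, Finset.sum_congr rfl hqL, Finset.sum_congr rfl hqT]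
      simp [mul_comm]
    have hq : ∀ j ∈ M, 0 ≤ q j := by
      intro j hj
      rw [← hTL, Finset.mem_union] at hj
      rcases hj with hj | hj
      · rw [hqT j hj]; exact hg j hj
      · rw [hqL j hj]; exact hc.le
    obtain ⟨S, hS, h1, h2⟩ := price q hq (hQ ▸ hpos)
    rw [hQ] at h1
    have hk0 : (0 : ℝ) < k := by nlinarith
    have h3 : ∑ j ∈ S, q j < c := by
      have : (k : ℝ) * ∑ j ∈ S, q j < k * c := by linarith
      exact lt_of_mul_lt_mul_left this hk0.le
    have hST : S ⊆ T := by
      intro j hj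
      have hjM := hS hj
      rw [← hTL, Finset.mem_union] at hjM
      rcases hjM with hj' | hj'
      · exact hj'
      · exfalso
        have := Finset.single_le_sum (f := q) (fun i hi => hq i (hS hi)) hj
        rw [hqL j hj'] at this
        linarith
    refine ⟨S, hST, ?_, h2⟩
    rwa [Finset.sum_congr rfl (fun j hj => hqT j (hST hj))] at h3
  by_cases hmk : k + 1 ≤ L.card
  · obtain ⟨L', hL', hc⟩ := Finset.exists_subset_card_eq hmk
    have h0 : Pack w h 0 (∅ : Finset ι) := trivial
    have := h0.large L' (by simp) (fun j hj => hLw j (hL' hj))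
    rw [hc, zero_add] at this
    exact this.mono (by simpa using hL'.trans hLM)
  have hmk' : L.card ≤ k := by omega
  obtain ⟨n, hn⟩ := Nat.exists_eq_add_of_le hmk'
  -- k = |L| + n, need n + 1 bags from T
  suffices hs : Pack w h (n + 1) T by
    have := hs.large L hdis hLw
    rw [hTL] at this
    have e : n + 1 + L.card = k + 1 := by omega
    rwa [e] at this
  have hnR : (k : ℝ) = L.card + n := by exact_mod_cast hn
  rcases n with _ | m
  · refine ⟨T, le_refl _, ?_, trivial⟩
    rcases Nat.eq_zero_or_pos L.card with h0 | h0
    · rw [Finset.card_eq_zero] at h0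
      have := hLT w
      rw [h0] at this
      simp at this
      linarith
    · have h0' : (0 : ℝ) < L.card := by exact_mod_cast h0
      simp at hnR
      obtain ⟨S, hS, -, h2⟩ := price2 (fun _ => 0) 1 one_pos (by simp) (by simp [hnR]) (by simpa using h0)
      have := Finset.sum_le_sum_of_subset_of_nonneg (f := w) hS (fun i hi _ => hT0 i hi)
      linarith
  push_cast at hnR
  have hm0 : (0 : ℝ) ≤ m := by positivity
  have hmh : 0 ≤ (m : ℝ) * h := by positivity
  -- total value of T
  have hTv : 2 * (m + 1) * h < ∑ j ∈ T, w j := by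
    by_contra hcon
    push Not at hcon
    have hTnn : 0 ≤ ∑ j ∈ T, w j := Finset.sum_nonneg hT0
    obtain ⟨S, hS, h1, h2⟩ := price2 w (2 * h) (by linarith) hT0 (by
        rw [hnR]; nlinarith) (by
        have hL0 : (0 : ℝ) ≤ 2 * h * L.card := by positivity
        rcases Nat.eq_zero_or_pos L.card with h0 | h0
        · rw [Finset.card_eq_zero] at h0
          have := hLT w
          rw [h0] at this
          simp at this
          linarith
        · have h0' : (0 : ℝ) < L.card := by exact_mod_cast h0
          have : (0 : ℝ) < 2 * h * L.card := by positivity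
          linarith)
    linarith
  have hTne : T.Nonempty := by
    rw [Finset.nonempty_iff_ne_empty]
    intro h'
    rw [h'] at hTv
    simp at hTv
    nlinarith
  obtain ⟨x1, hx1, hx1m⟩ := Finset.exists_max_image T w hTne
  have eT : w x1 + ∑ j ∈ T.erase x1, w j = ∑ j ∈ T, w j := Finset.add_sum_erase T w hx1
  have hx1h := hTw x1 hx1
  have hT1 : (T.erase x1).Nonempty := by
    rw [Finset.nonempty_iff_ne_empty]
    intro h'
    rw [h'] at eT
    simp at eT
    nlinarith
  obtain ⟨x2, hx2, hx2m⟩ := Finset.exists_max_image (T.erase x1) w hT1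
  have hx2T : x2 ∈ T := Finset.mem_of_mem_erase hx2
  have hne : x1 ≠ x2 := (Finset.ne_of_mem_erase hx2).symm
  have hD : ({x1, x2} : Finset ι) ⊆ T := by
    intro y hy; simp at hy; rcases hy with rfl | rfl <;> assumption
  have eD : ∑ j ∈ ({x1, x2} : Finset ι), w j = w x1 + w x2 := Finset.sum_pair hne
  have e3 := sum_sdiff_eq w hD
  have key := main_aux w h hh x1 x2 hne hx1h (hTw x2 hx2T) m (T \ {x1, x2}) (by simp) (by simp)
    (fun j hj => hT0 j (Finset.sdiff_subset hj)) (fun j hj => hTw j (Finset.sdiff_subset hj))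
    (by rw [e3, eD]; linarith) ?_
  · rwa [Finset.union_sdiff_of_subset hD] at key
  intro H hH hcard
  set F := ({x1, x2} : Finset ι) ∪ H with hF
  have hFT : F ⊆ T := Finset.union_subset hD (hH.trans Finset.sdiff_subset)
  have hFc : F.card ≤ 2 * m + 3 := by
    have h3 : F.card ≤ _ := Finset.card_union_le ({x1, x2} : Finset ι) H
    have h4 : ({x1, x2} : Finset ι).card = 2 := Finset.card_pair hne
    omega
  have hF0 : 0 < F.card := Finset.card_pos.mpr ⟨x1, by simp [hF]⟩
  have hFcR : (F.card : ℝ) ≤ 2 * m + 3 := by exact_mod_cast hFc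
  have hF0R : (0 : ℝ) < F.card := by exact_mod_cast hF0
  let g : ι → ℝ := fun j => if j ∈ F then (m + 1 : ℝ) else 0
  have hg : ∀ S : Finset ι, ∑ j ∈ S, g j = (m + 1) * (S ∩ F).card := by
    intro S
    simp only [g]
    rw [← Finset.sum_filter, Finset.filter_mem_eq_inter]
    rw [Finset.sum_const, nsmul_eq_mul, mul_comm]
  have hTF : T ∩ F = F := Finset.inter_eq_right.mpr hFT
  obtain ⟨S, hS, h1, h2⟩ := price2 g (2 * m + 3) (by positivity) (by
      intro j _; simp only [g]; split_ifs <;> positivity) (by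
      rw [hg, hTF, hnR]; nlinarith) (by
      rw [hg, hTF]; positivity)
  rw [hg] at h1
  have hSF : (S ∩ F).card ≤ 2 := by
    by_contra hcon
    have : (3 : ℝ) ≤ (S ∩ F).card := by exact_mod_cast (by omega : 3 ≤ (S ∩ F).card)
    nlinarith
  have hb1 := two_le_aux w (S ∩ F) x1 x2 (hT0 x1 hx1) (hT0 x2 hx2T)
    (fun j hj => hx1m j (hS (Finset.inter_subset_left hj)))
    (fun j hj hj1 => hx2m j (Finset.mem_erase.mpr ⟨hj1, hS (Finset.inter_subset_left hj)⟩)) hSF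
  have hb2 : ∑ j ∈ S \ F, w j ≤ ∑ j ∈ (T \ {x1, x2}) \ H, w j := by
    refine Finset.sum_le_sum_of_subset_of_nonneg ?_ ?_
    · intro y hy
      have := @hS y
      simp only [hF, Finset.mem_sdiff, Finset.mem_union] at *
      tauto
    · intro y hy _
      exact hT0 y (Finset.sdiff_subset (Finset.sdiff_subset hy))
  have hb3 := Finset.sum_inter_add_sum_sdiff S F w
  linarith

theorem two_pessimistic_ge_aps {ι : Type*} [DecidableEq ι] (M : Finset ι)
    (w : ι → ℝ) (hw : ∀ j ∈ M, 0 ≤ w j)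
    (b : ℝ) (hb0 : 0 < b) (hb1 : b ≤ 1) :
    APS b (fun S => ∑ j ∈ S, w j) M
      ≤ 2 * Pessimistic b (fun S => ∑ j ∈ S, w j) M ∧
    ∃ P : Fin ⌈1 / b⌉₊ → Finset ι, IsPartition M P ∧
      ∀ i, APS b (fun S => ∑ j ∈ S, w j) M / 2 ≤ ∑ j ∈ P i, w j := by
  
  set z := APS b (fun S => ∑ j ∈ S, w j) M with hzd
  set k := ⌈1 / b⌉₊ with hk
  have hk0 : 0 < k := Nat.ceil_pos.mpr (by positivity)
  have hkb : 1 / b ≤ k := Nat.le_ceil _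
  obtain ⟨k', hk'⟩ : ∃ k', k = k' + 1 := ⟨k - 1, by omega⟩
  have hlt : b * k' < 1 := by
    have : (k : ℝ) < 1 / b + 1 := Nat.ceil_lt_add_one (by positivity)
    rw [hk'] at this
    push_cast at this
    have h2 : (k' : ℝ) < 1 / b := by linarith
    rw [lt_div_iff₀ hb0] at h2
    linarith
  have part : ∃ P : Fin k → Finset ι, IsPartition M P ∧ ∀ i, z / 2 ≤ ∑ j ∈ P i, w j := by
    rw [hk']
    refine Pack.partition hw ?_
    rcases le_or_gt z 0 with hz | hz
    · have : ∀ n R, Pack w (z / 2) n (R : Finset ι) := by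
        intro n
        induction n with
        | zero => intro R; trivial
        | succ n ih => intro R; exact ⟨∅, by simp, by simp; linarith, ih _⟩
      exact this _ _
    · exact pack_main M w hw b hb0 k' hlt (z / 2) (by linarith) (by linarith)
  refine ⟨?_, part⟩
  obtain ⟨P, hP, hPv⟩ := part
  have : z / 2 ≤ Pessimistic b (fun S => ∑ j ∈ S, w j) M := by
    refine le_csSup ⟨∑ j ∈ M, w j, ?_⟩ ⟨1, k, one_pos, hk0, ?_, P, hP, ?_⟩
    · rintro t ⟨l, d, hl, hd, hld, P', hP', ht⟩
      have hdR : (0 : ℝ) < d := by exact_mod_cast hd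
      have hle : l ≤ d := by
        have h1 := hld.trans hb1
        rw [div_le_one hdR] at h1
        exact_mod_cast h1
      obtain ⟨J, -, hJ⟩ := Finset.exists_subset_card_eq (s := (Finset.univ : Finset (Fin d)))
        (n := l) (by simpa using hle)
      refine (ht J hJ).trans (Finset.sum_le_sum_of_subset_of_nonneg ?_ (fun i hi _ => hw i hi))
      exact Finset.biUnion_subset.mpr (fun i _ => hP'.1 i)
    · have hkR : (0 : ℝ) < k := by exact_mod_cast hk0
      rw [div_le_iff₀ hb0] at hkb
      rw [Nat.cast_one, div_le_iff₀ hkR]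
      linarith
    · intro J hJ
      obtain ⟨i, rfl⟩ := Finset.card_eq_one.mp hJ
      simpa using hPv i
  linarith
end

section
/- There exists an additive valuation v over a set M of 15 items for which the AnyPrice share at entitlement 1/3 strictly exceeds the maximin share for 3 agents: specifically, for the additive valuation whose multiset of item values is {5, 5, 5, 7, 7, 7, 11, 17, 23, 23, 23, 31, 31, 31, 65}, one has APS(1/3, v, M) = 97 while MMS_3(v, M) ≤ 96, and hence APS(1/3, v, M) > MMS_3(v, M) = Pessimistic(1/3, v, M). -/
open Finset

/-- The maximin share for `n` agents: the maximum over partitions of `M` into `n`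
bundles of the minimum bundle value. -/
noncomputable def MMS {ι : Type*} [DecidableEq ι] (n : ℕ) (v : Finset ι → ℝ) (M : Finset ι) : ℝ :=
  sSup {t : ℝ | ∃ A : Fin n → Finset ι, IsPartition M A ∧ ∀ i, t ≤ v (A i)}

def wN : Fin 15 → ℕ := ![5, 5, 5, 7, 7, 7, 11, 17, 23, 23, 23, 31, 31, 31, 65]

lemma sum15 {R : Type*} [AddCommMonoid R] (g : Fin 15 → R) : ∑ j, g j =
    g 0 + g 1 + g 2 + g 3 + g 4 + g 5 + g 6 + g 7 + g 8 + g 9 + g 10 + g 11 + g 12 + g 13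
      + g 14 := by
  simp only [Fin.sum_univ_castSucc, Fin.sum_univ_zero, zero_add]
  rfl

lemma w_cast : (![5, 5, 5, 7, 7, 7, 11, 17, 23, 23, 23, 31, 31, 31, 65] : Fin 15 → ℝ) =
    fun j => (wN j : ℝ) := by
  funext j
  fin_cases j <;> norm_num [wN]

lemma mms_eq_pess {ι : Type*} [DecidableEq ι] (w : ι → ℕ) (M : Finset ι) :
    MMS 3 (fun S => ∑ j ∈ S, (w j : ℝ)) M =
      Pessimistic (1 / 3) (fun S => ∑ j ∈ S, (w j : ℝ)) M := by
  unfold MMS Pessimistic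
  congr 1
  ext t
  constructor
  · rintro ⟨A, hA, ht⟩
    refine ⟨1, 3, by norm_num, by norm_num, by norm_num, A, hA, ?_⟩
    intro J hJ
    obtain ⟨a, rfl⟩ := Finset.card_eq_one.1 hJ
    simpa using ht a
  · rintro ⟨l, d, hl, hd, hld, P, ⟨hP1, hP2, hP3⟩, ht⟩
    have h3 : 3 * l ≤ d := by
      have hd' : (0 : ℝ) < d := by exact_mod_cast hd
      rw [div_le_iff₀ hd'] at hld
      have : (3 : ℝ) * l ≤ d := by linarith
      exact_mod_cast this
    let K : Fin 3 → Finset (Fin d) := fun i =>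
      Finset.univ.filter (fun j : Fin d => min ((j : ℕ) / l) 2 = (i : ℕ))
    refine ⟨fun i => (K i).biUnion P, ⟨?_, ?_, ?_⟩, ?_⟩
    · intro i
      exact Finset.biUnion_subset.2 fun j _ => hP1 j
    · intro i j hij
      simp only [Finset.disjoint_biUnion_left, Finset.disjoint_biUnion_right]
      intro a ha b hb
      apply hP2
      rintro rfl
      simp only [K, Finset.mem_filter] at ha hb
      exact hij (Fin.ext (by omega))
    · intro x hx
      obtain ⟨j, hj⟩ := hP3 x hx
      refine ⟨⟨min ((j : ℕ) / l) 2, by omega⟩, ?_⟩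
      simp only [Finset.mem_biUnion]
      exact ⟨j, by simp [K], hj⟩
    · intro i
      have hc : l ≤ (K i).card := by
        have hi : (i : ℕ) ≤ 2 := by omega
        have hil : (i : ℕ) * l ≤ 2 * l := Nat.mul_le_mul_right _ hi
        have := Finset.card_le_card_of_injOn (s := (Finset.univ : Finset (Fin l))) (t := K i)
          (fun a => (⟨i * l + a, by omega⟩ : Fin d)) ?_ ?_
        · simpa using this
        · intro a _
          have : ((i : ℕ) * l + a) / l = i := by
            rw [mul_comm, Nat.mul_add_div hl, Nat.div_eq_of_lt a.2, add_zero]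
          simp [K, this]
          omega
        · intro a _ b _ hab
          simp only [Fin.mk.injEq] at hab
          exact Fin.ext (by omega)
      obtain ⟨J, hJ, hJc⟩ := Finset.exists_subset_card_eq hc
      refine (ht J hJc).trans ?_
      apply Finset.sum_le_sum_of_subset_of_nonneg
      · exact Finset.biUnion_subset_biUnion_of_subset_left _ hJ
      · intros
        positivity

lemma no_part1 : ∀ a b c d e f : ℕ, a ≤ 3 → b ≤ 3 → c ≤ 1 → d ≤ 1 → e ≤ 3 → f ≤ 3 →
    5 * a + 7 * b + 11 * c + 17 * d + 23 * e + 31 * f + 65 = 97 →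
    (a = 3 ∧ b = 0 ∧ c = 0 ∧ d = 1 ∧ e = 0 ∧ f = 0) ∨
    (a = 0 ∧ b = 3 ∧ c = 1 ∧ d = 0 ∧ e = 0 ∧ f = 0) := by
  intro a b c d e f ha hb hc hd he hf h
  have he : e ≤ 1 := by omega
  have hf : f ≤ 1 := by omega
  interval_cases e <;> interval_cases f <;> interval_cases c <;> interval_cases d <;>
    interval_cases a <;> omega

/-- A bundle of value 97 that contains at least two items of value 31, when the remaining
items are those of one of the two residual instances, is impossible. -/
lemma no_part2 (a b c d e f : ℕ) (hf2 : 2 ≤ f) (hf : f ≤ 3)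
    (h : (a = 0 ∧ d = 0 ∧ b ≤ 3 ∧ c ≤ 1) ∨ (b = 0 ∧ c = 0 ∧ a ≤ 3 ∧ d ≤ 1)) :
    5 * a + 7 * b + 11 * c + 17 * d + 23 * e + 31 * f ≠ 97 := by
  intro h97
  have he : e ≤ 1 := by omega
  rcases h with ⟨rfl, rfl, hb, hc⟩ | ⟨rfl, rfl, ha, hd⟩
  · interval_cases f <;> interval_cases e <;> interval_cases c <;> omega
  · interval_cases f <;> interval_cases e <;> interval_cases d <;> omega

/-- Type-level impossibility, with the item of value 65 in the first bundle. -/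
lemma no_part3 (a a' a'' b b' b'' c c' c'' d d' d'' e e' e'' f f' f'' : ℕ)
    (ha : a + a' + a'' = 3) (hb : b + b' + b'' = 3) (hc : c + c' + c'' = 1)
    (hd : d + d' + d'' = 1) (he : e + e' + e'' = 3) (hf : f + f' + f'' = 3)
    (h0 : 5 * a + 7 * b + 11 * c + 17 * d + 23 * e + 31 * f + 65 = 97)
    (h1 : 5 * a' + 7 * b' + 11 * c' + 17 * d' + 23 * e' + 31 * f' = 97)
    (h2 : 5 * a'' + 7 * b'' + 11 * c'' + 17 * d'' + 23 * e'' + 31 * f'' = 97) : False := by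
  have h : (a = 3 ∧ b = 0 ∧ c = 0 ∧ d = 1 ∧ e = 0 ∧ f = 0) ∨
      (a = 0 ∧ b = 3 ∧ c = 1 ∧ d = 0 ∧ e = 0 ∧ f = 0) := by
    apply no_part1 a b c d e f _ _ _ _ _ _ h0 <;> clear h0 h1 h2 <;> omega
  by_cases h' : 2 ≤ f'
  · refine no_part2 a' b' c' d' e' f' h' ?_ ?_ h1 <;> clear h0 h1 h2 <;> omega
  · refine no_part2 a'' b'' c'' d'' e'' f'' ?_ ?_ ?_ h2 <;> clear h0 h1 h2 <;> omega

lemma no_part (A : Fin 3 → Finset (Fin 15)) (hA : IsPartition Finset.univ A)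
    (h : ∀ i, 97 ≤ ∑ j ∈ A i, wN j) : False := by
  obtain ⟨-, hA2, hA3⟩ := hA
  let x : Fin 3 → Fin 15 → ℕ := fun i j => if j ∈ A i then 1 else 0
  have hx : ∀ j, x 0 j + x 1 j + x 2 j = 1 := by
    intro j
    have h01 : j ∈ A 0 → j ∉ A 1 := fun hj => Finset.disjoint_left.1 (hA2 0 1 (by decide)) hj
    have h02 : j ∈ A 0 → j ∉ A 2 := fun hj => Finset.disjoint_left.1 (hA2 0 2 (by decide)) hj
    have h12 : j ∈ A 1 → j ∉ A 2 := fun hj => Finset.disjoint_left.1 (hA2 1 2 (by decide)) hj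
    obtain ⟨i, hi⟩ := hA3 j (Finset.mem_univ _)
    simp only [x]
    fin_cases i <;> simp at hi <;> simp_all
  have hs : ∀ i, ∑ j ∈ A i, wN j =
      5 * (x i 0 + x i 1 + x i 2) + 7 * (x i 3 + x i 4 + x i 5) + 11 * x i 6 + 17 * x i 7 +
      23 * (x i 8 + x i 9 + x i 10) + 31 * (x i 11 + x i 12 + x i 13) + 65 * x i 14 := by
    intro i
    have : ∑ j ∈ A i, wN j = ∑ j, x i j * wN j := by
      simp [x, Finset.sum_ite_mem]
    rw [this]
    rw [sum15]
    simp only [show wN 0 = 5 from rfl, show wN 1 = 5 from rfl, show wN 2 = 5 from rfl,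
      show wN 3 = 7 from rfl, show wN 4 = 7 from rfl, show wN 5 = 7 from rfl,
      show wN 6 = 11 from rfl, show wN 7 = 17 from rfl, show wN 8 = 23 from rfl,
      show wN 9 = 23 from rfl, show wN 10 = 23 from rfl, show wN 11 = 31 from rfl,
      show wN 12 = 31 from rfl, show wN 13 = 31 from rfl, show wN 14 = 65 from rfl]
    ring
  clear_value x
  have key : ∀ p q r : Fin 3, (∀ j, x p j + x q j + x r j = 1) → x p 14 = 1 →
      (97 ≤ ∑ j ∈ A p, wN j) → (97 ≤ ∑ j ∈ A q, wN j) → (97 ≤ ∑ j ∈ A r, wN j) → False := by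
    intro p q r hy hp k0 k1 k2
    rw [hs] at k0 k1 k2
    have y0 := hy 0
    have y1 := hy 1
    have y2 := hy 2
    have y3 := hy 3
    have y4 := hy 4
    have y5 := hy 5
    have y6 := hy 6
    have y7 := hy 7
    have y8 := hy 8
    have y9 := hy 9
    have y10 := hy 10
    have y11 := hy 11
    have y12 := hy 12
    have y13 := hy 13
    have y14 := hy 14
    refine no_part3 (x p 0 + x p 1 + x p 2) (x q 0 + x q 1 + x q 2) (x r 0 + x r 1 + x r 2)
      (x p 3 + x p 4 + x p 5) (x q 3 + x q 4 + x q 5) (x r 3 + x r 4 + x r 5)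
      (x p 6) (x q 6) (x r 6) (x p 7) (x q 7) (x r 7)
      (x p 8 + x p 9 + x p 10) (x q 8 + x q 9 + x q 10) (x r 8 + x r 9 + x r 10)
      (x p 11 + x p 12 + x p 13) (x q 11 + x q 12 + x q 13) (x r 11 + x r 12 + x r 13)
      ?_ ?_ ?_ ?_ ?_ ?_ ?_ ?_ ?_ <;> linarith
  have c : x 0 14 = 1 ∨ x 1 14 = 1 ∨ x 2 14 = 1 := by have := hx 14; omega
  rcases c with c | c | c
  · exact key 0 1 2 hx c (h 0) (h 1) (h 2)
  · exact key 1 0 2 (fun j => by have := hx j; omega) c (h 1) (h 0) (h 2)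
  · exact key 2 0 1 (fun j => by have := hx j; omega) c (h 2) (h 0) (h 1)

lemma mms_le : MMS 3 (fun S => ∑ j ∈ S, (wN j : ℝ)) Finset.univ ≤ 96 := by
  unfold MMS
  apply Real.sSup_le _ (by norm_num)
  rintro t ⟨A, hA, ht⟩
  by_contra hlt
  push Not at hlt
  apply no_part A hA
  intro i
  have h1 : (96 : ℝ) < ∑ j ∈ A i, (wN j : ℝ) := hlt.trans_le (ht i)
  have h2 : 96 < ∑ j ∈ A i, wN j := by exact_mod_cast h1
  omega

lemma bdd (p : Fin 15 → ℝ) (b : ℝ) : BddAbove {u : ℝ | ∃ S, S ⊆ (Finset.univ : Finset (Fin 15)) ∧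
    (∑ j ∈ S, p j) ≤ b ∧ u = ∑ j ∈ S, (wN j : ℝ)} := by
  refine ⟨∑ j, (wN j : ℝ), ?_⟩
  rintro u ⟨S, hS, -, rfl⟩
  apply Finset.sum_le_sum_of_subset_of_nonneg hS
  intros
  positivity

lemma lower (p : Fin 15 → ℝ) (hp : ∑ j, p j = 1) :
    (97 : ℝ) ≤ sSup {u : ℝ | ∃ S, S ⊆ (Finset.univ : Finset (Fin 15)) ∧
    (∑ j ∈ S, p j) ≤ 1 / 3 ∧ u = ∑ j ∈ S, (wN j : ℝ)} := by
  have key : ∀ S : Finset (Fin 15), ∑ j ∈ S, wN j = 97 → ∑ j ∈ S, p j ≤ 1 / 3 →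
      (97 : ℝ) ≤ sSup {u : ℝ | ∃ S, S ⊆ (Finset.univ : Finset (Fin 15)) ∧
      (∑ j ∈ S, p j) ≤ 1 / 3 ∧ u = ∑ j ∈ S, (wN j : ℝ)} := by
    intro S hS hpS
    apply le_csSup (bdd p _)
    exact ⟨S, Finset.subset_univ _, hpS, by exact_mod_cast hS.symm⟩
  by_contra hn
  have k : ∀ S : Finset (Fin 15), ∑ j ∈ S, wN j = 97 → 1 / 3 < ∑ j ∈ S, p j := by
    intro S hS
    by_contra hc
    exact hn (key S hS (not_lt.1 hc))
  have k1 := k {6, 7, 8, 9, 10} (by decide)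
  have k2 := k {0, 3, 8, 11, 12} (by decide)
  have k3 := k {1, 4, 9, 11, 13} (by decide)
  have k4 := k {2, 5, 10, 12, 13} (by decide)
  have k5 := k {3, 4, 5, 6, 14} (by decide)
  have k6 := k {0, 1, 2, 7, 14} (by decide)
  rw [sum15] at hp
  simp at k1 k2 k3 k4 k5 k6
  linarith

lemma total : ∑ j, (wN j : ℝ) = 291 := by
  have : ∑ j, wN j = 291 := by decide
  exact_mod_cast this

lemma aps_eq : APS (1 / 3) (fun S => ∑ j ∈ S, (wN j : ℝ)) Finset.univ = 97 := by
  unfold APS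
  have hsum : ∑ j, (wN j : ℝ) / 291 = 1 := by
    rw [← Finset.sum_div, total]
    norm_num
  apply le_antisymm
  · refine csInf_le_of_le ?_ ⟨fun j => (wN j : ℝ) / 291, fun j _ => by positivity, hsum, rfl⟩ ?_
    · refine ⟨97, ?_⟩
      rintro t ⟨p, -, hp, rfl⟩
      exact lower p hp
    · apply Real.sSup_le _ (by norm_num)
      rintro u ⟨S, -, hS, rfl⟩
      rw [← Finset.sum_div] at hS
      simp only
      linarith
  · refine le_csInf ⟨_, fun j => (wN j : ℝ) / 291, fun j _ => by positivity, hsum, rfl⟩ ?_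
    rintro t ⟨p, -, hp, rfl⟩
    exact lower p hp

/-- A concrete instance on 15 items with item values
`5,5,5,7,7,7,11,17,23,23,23,31,31,31,65` for which the AnyPrice share at entitlement
`1/3` equals 97 while the maximin share for 3 agents is at most 96; hence the AnyPrice
share strictly exceeds the maximin share, which equals the pessimistic share. -/
theorem aps_strictly_exceeds_mms_example :
    APS (1 / 3) (fun S => ∑ j ∈ S, (![5, 5, 5, 7, 7, 7, 11, 17, 23, 23, 23, 31, 31, 31, 65] : Fin 15 → ℝ) j) Finset.univ = 97 ∧
    MMS 3 (fun S => ∑ j ∈ S, (![5, 5, 5, 7, 7, 7, 11, 17, 23, 23, 23, 31, 31, 31, 65] : Fin 15 → ℝ) j) Finset.univ ≤ 96 ∧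
    MMS 3 (fun S => ∑ j ∈ S, (![5, 5, 5, 7, 7, 7, 11, 17, 23, 23, 23, 31, 31, 31, 65] : Fin 15 → ℝ) j) Finset.univ
      < APS (1 / 3) (fun S => ∑ j ∈ S, (![5, 5, 5, 7, 7, 7, 11, 17, 23, 23, 23, 31, 31, 31, 65] : Fin 15 → ℝ) j) Finset.univ ∧
    MMS 3 (fun S => ∑ j ∈ S, (![5, 5, 5, 7, 7, 7, 11, 17, 23, 23, 23, 31, 31, 31, 65] : Fin 15 → ℝ) j) Finset.univ
      = Pessimistic (1 / 3) (fun S => ∑ j ∈ S, (![5, 5, 5, 7, 7, 7, 11, 17, 23, 23, 23, 31, 31, 31, 65] : Fin 15 → ℝ) j) Finset.univ := by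
  rw [w_cast]
  refine ⟨aps_eq, mms_le, ?_, mms_eq_pess wN _⟩
  rw [aps_eq]
  exact mms_le.trans_lt (by norm_num)
end
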